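/- Suppose A, B ⊆ 𝔽_p are finite sets with |A|, |B| < √p, |A+A| ≤ K|A|, |B+B| ≤ L|B|, and 0 ∉ A. Then the number of sextuples (a,a',b₁,b₁',b₂,b₂') ∈ A² × B⁴ with b₁a' = b₁'a and b₂a' = b₂'a is O(K^{5/4}·L^{5/2}·|A|·|B|²·log p + |A|²·|B|). -/

import Mathlib

open Finset Pointwise

/-!
Fibering the sextuples over `a' / a` bounds their number by a sum `∑ x, r_A(x) * r_B(x) ^ 2`, where
`r_A` and `r_B` count representations as ratios. By Hölder this is controlled by the third
multiplicative energies of `A` and `B`, hence by the number of ratios `x` with `t ≤ r_A(x)`.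
The lines of such a slope `x` through the points of `A × A` contain at least `t` points of the grid
`(A + A) × (A + A)`, so the question becomes one about rich lines in grids.

A line `l` together with an abscissa `u` gives one line in each of two families of lines in
three-space, and the lines given by `(l, u)` and `(l', u')` meet when `l(u') = l'(u)`; by
Cauchy-Schwarz this happens often if the lines `l` are rich. Take a surface of low degree containing
one of the families. It contains the other one too, and the diagonal entries of its second
fundamental form vanish along the lines. By the Codazzi equation the slope of the tangent plane is
then an affine function along a line, so that most lines meeting it belong to one linear family,
and linear families are bounded directly. The degrees stay below the characteristic because
`|A| < √p`.
-/

namespace SumProduct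

section Univariate

open Polynomial

variable {F : Type*} [Field F] {p : ℕ} [CharP F p]

variable (p) in
lemma natDegree_eq_zero_of_derivative_eq_zero {f : F[X]} (hf : derivative f = 0)
    (hdeg : f.natDegree < p) : f.natDegree = 0 := by
  by_contra hpos
  obtain ⟨n, hn⟩ := Nat.exists_eq_succ_of_ne_zero hpos
  have hcoeff : f.coeff (n + 1) * (n + 1) = 0 := by rw [← coeff_derivative, hf, coeff_zero]
  rcases mul_eq_zero.mp hcoeff with hlead | hcast
  · have hf0 : f = 0 := by rwa [← leadingCoeff_eq_zero, leadingCoeff, hn]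
    simp [hf0] at hpos
  · have hdvd : p ∣ n + 1 := (CharP.cast_eq_zero_iff F p (n + 1)).mp (by exact_mod_cast hcast)
    have := Nat.le_of_dvd n.succ_pos hdvd
    omega

variable (p) in
lemma exists_eq_C_mul_of_wronskian_eq_zero {f g : F[X]} (hg : g ≠ 0) (hfdeg : f.natDegree < p)
    (hgdeg : g.natDegree < p) (hw : wronskian f g = 0) : ∃ c : F, f = C c * g := by
  classical
  rcases eq_or_ne f 0 with rfl | hf
  · exact ⟨0, by simp⟩
  let _ := UniqueFactorizationMonoid.toGCDMonoid F[X]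
  obtain ⟨f₁, g₁, hf₁, hg₁, hunit⟩ := extract_gcd f g
  have hcop : IsCoprime f₁ g₁ := (gcd_isUnit_iff _ _).mp hunit
  generalize gcd f g = h at hf₁ hg₁
  subst hf₁ hg₁
  have hh : h ≠ 0 := left_ne_zero_of_mul hg
  have hw₁ : wronskian f₁ g₁ = 0 := by
    refine (mul_eq_zero.mp (?_ : h ^ 2 * wronskian f₁ g₁ = 0)).resolve_left (pow_ne_zero _ hh)
    simp only [wronskian, derivative_mul] at hw ⊢
    linear_combination hw
  obtain ⟨hf₁', hg₁'⟩ := hcop.wronskian_eq_zero_iff.mp hw₁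
  rw [natDegree_mul hh (right_ne_zero_of_mul hf)] at hfdeg
  rw [natDegree_mul hh (right_ne_zero_of_mul hg)] at hgdeg
  obtain ⟨a, rfl⟩ := natDegree_eq_zero.mp
    (natDegree_eq_zero_of_derivative_eq_zero p hf₁' (by omega))
  obtain ⟨b, rfl⟩ := natDegree_eq_zero.mp
    (natDegree_eq_zero_of_derivative_eq_zero p hg₁' (by omega))
  have hb : b ≠ 0 := by
    rintro rfl
    simp at hg
  exact ⟨a / b, by rw [mul_left_comm, ← C_mul, div_mul_cancel₀ _ hb]⟩

-- The hypothesis says that the second derivative of the rational function `f / g` vanishes.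
variable (p) in
lemma exists_eq_linear_mul_of_derivative_wronskian {f g : F[X]} {n : ℕ} (hg : g ≠ 0)
    (hfdeg : f.natDegree ≤ n) (hgdeg : g.natDegree ≤ n) (hp : 2 * n + 1 < p)
    (h : g * derivative (wronskian g f) = 2 * derivative g * wronskian g f) :
    ∃ a b : F, f = (C a * X + C b) * g := by
  have hwdeg : (wronskian g f).natDegree ≤ 2 * n := by
    rcases eq_or_ne (wronskian g f) 0 with hw | hw
    · simp [hw]
    · have := natDegree_wronskian_lt_add hw
      omega
  have hsqdeg : (g ^ 2).natDegree ≤ 2 * n := natDegree_pow_le.trans (by omega)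
  obtain ⟨a, ha⟩ : ∃ a : F, wronskian g f = C a * g ^ 2 := by
    refine exists_eq_C_mul_of_wronskian_eq_zero p (pow_ne_zero 2 hg) (by omega) (by omega) ?_
    rw [wronskian, derivative_pow_succ]
    simp only [Nat.cast_one, C_add, C_1, pow_one]
    linear_combination -g * h
  have hlindeg : (f - C a * X * g).natDegree ≤ n + 1 := by
    refine (natDegree_sub_le _ _).trans (max_le (by omega) (natDegree_mul_le.trans ?_))
    have : (C a * X).natDegree ≤ 1 := (natDegree_C_mul_le a X).trans_eq natDegree_X
    omega
  obtain ⟨b, hb⟩ : ∃ b : F, f - C a * X * g = C b * g := by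
    refine exists_eq_C_mul_of_wronskian_eq_zero p hg (by omega) (by omega) ?_
    simp only [wronskian, derivative_sub, derivative_mul, derivative_C, derivative_X] at ha ⊢
    linear_combination -ha
  exact ⟨a, b, by linear_combination hb⟩

end Univariate

section Multivariate

open MvPolynomial

variable {F σ : Type*} [Field F]

/-- Restriction of a polynomial in several variables to the line `t ↦ o + t • v`, as a polynomial
in the parameter `t`. -/
noncomputable def lineRestrict (o v : σ → F) : MvPolynomial σ F →ₐ[F] Polynomial F :=
  aeval fun i => Polynomial.C (o i) + Polynomial.C (v i) * Polynomial.X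

lemma eval_lineRestrict (o v : σ → F) (t : F) (P : MvPolynomial σ F) :
    (lineRestrict o v P).eval t = eval (o + t • v) P := by
  have h : (Polynomial.aeval t).comp (lineRestrict o v) = aeval (o + t • v) :=
    algHom_ext fun i => by simp [lineRestrict, mul_comm (v i)]
  simpa [Polynomial.coe_aeval_eq_eval, aeval_eq_eval] using DFunLike.congr_fun h P

lemma natDegree_lineRestrict_le (o v : σ → F) (P : MvPolynomial σ F) :
    (lineRestrict o v P).natDegree ≤ P.totalDegree := by
  refine (aeval_natDegree_le P le_rfl _ (n := 1) fun i => ?_).trans_eq (mul_one _)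
  rw [add_comm]
  exact Polynomial.natDegree_linear_le

lemma lineRestrict_eq_zero_of_eval_eq_zero {o v : σ → F} {P : MvPolynomial σ F} (s : Finset F)
    (hs : P.totalDegree < #s) (h : ∀ t ∈ s, eval (o + t • v) P = 0) : lineRestrict o v P = 0 :=
  Polynomial.eq_zero_of_natDegree_lt_card_of_eval_eq_zero' _ s
    (fun t ht => (eval_lineRestrict o v t P).trans (h t ht))
    ((natDegree_lineRestrict_le o v P).trans_lt hs)

lemma derivative_lineRestrict [Fintype σ] (o v : σ → F) (P : MvPolynomial σ F) :
    Polynomial.derivative (lineRestrict o v P) =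
      ∑ i, Polynomial.C (v i) * lineRestrict o v (pderiv i P) := by
  classical
  induction P using MvPolynomial.induction_on with
  | C a => simp [lineRestrict]
  | add P Q hP hQ => simp only [map_add, hP, hQ, mul_add, sum_add_distrib]
  | mul_X P j hP =>
    have hX : lineRestrict o v (X j) = Polynomial.C (o j) + Polynomial.C (v j) * Polynomial.X := by
      simp [lineRestrict]
    have hX' : Polynomial.derivative (lineRestrict o v (X j)) = Polynomial.C (v j) := by
      simp [hX]
    have hsum : ∑ i, Polynomial.C (v i) * (lineRestrict o v P * lineRestrict o v (pderiv i (X j))) =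
        lineRestrict o v P * Polynomial.C (v j) := by
      rw [sum_eq_single j (fun i _ hij => by simp [pderiv_X_of_ne hij.symm]) (by simp)]
      simp [mul_comm]
    simp only [map_mul, Polynomial.derivative_mul, hP, hX', pderiv_mul, map_add, mul_add,
      sum_add_distrib, hsum, sum_mul, mul_assoc]

lemma totalDegree_pderiv_lt {i : σ} {P : MvPolynomial σ F} (h : pderiv i P ≠ 0) :
    (pderiv i P).totalDegree < P.totalDegree := by
  classical
  obtain ⟨m, hm, hdeg⟩ := exists_mem_eq_sup _ (support_nonempty.mpr h) fun m => m.sum fun _ e => e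
  have hm' : m + Finsupp.single i 1 ∈ P.support := by
    rw [mem_support_iff] at hm ⊢
    rw [coeff_pderiv] at hm
    exact left_ne_zero_of_mul hm
  calc (pderiv i P).totalDegree = m.degree := hdeg
    _ < (m + Finsupp.single i 1).degree := by simp
    _ ≤ P.totalDegree := le_totalDegree hm'

lemma totalDegree_pderiv_le (i : σ) (P : MvPolynomial σ F) :
    (pderiv i P).totalDegree ≤ P.totalDegree := by
  rcases eq_or_ne (pderiv i P) 0 with h | h
  · simp [h]
  · exact (totalDegree_pderiv_lt h).le

lemma pderiv_pderiv_comm (i j : σ) (P : MvPolynomial σ F) :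
    pderiv i (pderiv j P) = pderiv j (pderiv i P) := by
  classical
  let D (k : σ) : Derivation F (MvPolynomial σ F) (MvPolynomial σ F) := pderiv k
  have h : ⁅D i, D j⁆ = 0 := by
    refine derivation_ext fun k => ?_
    simp only [D, Derivation.commutator_apply, pderiv_X, Pi.single_apply]
    split_ifs <;> simp
  refine sub_eq_zero.mp ((Derivation.commutator_apply (D1 := D i) (D2 := D j) P).symm.trans ?_)
  rw [h, Derivation.coe_zero, Pi.zero_apply]

variable (p : ℕ) [CharP F p] in
lemma eval_add_smul_single_of_pderiv_eq_zero [Finite σ] [DecidableEq σ] {i : σ}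
    {P : MvPolynomial σ F} (h : pderiv i P = 0) (hp : P.totalDegree < p) (z : σ → F) (t : F) :
    eval (z + t • Pi.single i 1) P = eval z P := by
  cases nonempty_fintype σ
  have hder : Polynomial.derivative (lineRestrict z (Pi.single i 1) P) = 0 := by
    rw [derivative_lineRestrict, sum_eq_single i (fun j _ hj => by simp [hj]) (by simp), h]
    simp
  obtain ⟨c, hc⟩ := Polynomial.natDegree_eq_zero.mp (natDegree_eq_zero_of_derivative_eq_zero p hder
    ((natDegree_lineRestrict_le _ _ P).trans_lt hp))
  have heval (s : F) : eval (z + s • Pi.single i 1) P = c := by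
    rw [← eval_lineRestrict, ← hc, Polynomial.eval_C]
  rw [heval, ← heval 0, zero_smul, add_zero]

lemma finrank_restrictDegree [Fintype σ] (d : ℕ) :
    Module.finrank F (restrictDegree σ F d) = (d + 1) ^ Fintype.card σ := by
  let e : {n : σ →₀ ℕ // ∀ i, n i ≤ d} ≃ (σ → Fin (d + 1)) :=
    (Finsupp.equivFunOnFinite.subtypeEquiv fun n => by simp).trans
      (Equiv.subtypePiEquivPi (p := fun _ m => m < d + 1)) |>.trans
      (Equiv.piCongrRight fun _ => Fin.equivSubtype.symm)
  calc Module.finrank F (restrictDegree σ F d) = Nat.card {n : σ →₀ ℕ // ∀ i, n i ≤ d} :=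
        Module.finrank_eq_nat_card_basis (basisRestrictSupport F {n : σ →₀ ℕ | ∀ i, n i ≤ d})
    _ = (d + 1) ^ Fintype.card σ := by simp [Nat.card_congr e, Nat.card_fun]

lemma exists_ne_zero_totalDegree_le_of_card_lt [Fintype σ] (Z : Finset (σ → F)) {d : ℕ}
    (hZ : #Z < (d + 1) ^ Fintype.card σ) :
    ∃ P : MvPolynomial σ F, P ≠ 0 ∧ P.totalDegree ≤ Fintype.card σ * d ∧ ∀ z ∈ Z, eval z P = 0 := by
  let evalOn : restrictDegree σ F d →ₗ[F] (Z → F) :=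
    LinearMap.pi fun z => (aeval (R := F) z.1).toLinearMap ∘ₗ Submodule.subtype _
  have hker : LinearMap.ker evalOn ≠ ⊥ := by
    apply LinearMap.ker_ne_bot_of_finrank_lt
    rwa [Module.finrank_fintype_fun_eq_card, Fintype.card_coe, finrank_restrictDegree]
  obtain ⟨⟨P, hP⟩, hPker, hP0⟩ := (Submodule.ne_bot_iff _).mp hker
  refine ⟨P, fun h => hP0 (Subtype.ext h), ?_, fun z hz => ?_⟩
  · rw [mem_restrictDegree] at hP
    refine Finset.sup_le fun m hm => ?_
    rw [Finsupp.sum_fintype _ _ fun _ => rfl]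
    exact (sum_le_card_nsmul univ m d fun i _ => hP m hm i).trans_eq (by simp)
  · exact congrFun (LinearMap.mem_ker.mp hPker) ⟨z, hz⟩

end Multivariate

section LineSystems

open MvPolynomial

variable {F : Type*} [Field F]

/-- Parameters of a line in a coordinate slice of `F³`. For `{i, j} = {0, 1}` they describe the line
`z j = base`, `z 2 = slope * z i + intercept`, so that each parameter gives one line in each of two
families. -/
@[ext]
structure LineParam (F : Type*) where
  slope : F
  intercept : F
  base : F
  deriving DecidableEq

namespace LineParam

/-- The line of the `(i, j)` family with parameters `x` meets the line of the `(j, i)` family with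
parameters `y`. -/
def Meets (x y : LineParam F) : Prop :=
  x.slope * y.base + x.intercept = y.slope * x.base + y.intercept

instance [DecidableEq F] (x y : LineParam F) : Decidable (x.Meets y) :=
  inferInstanceAs (Decidable (_ = _))

/-- Restriction of a polynomial on `F³` to the line with parameters `x` along which the `i`-th
coordinate is the parameter and the `j`-th coordinate is constant. -/
noncomputable def ruling (i j : Fin 3) (x : LineParam F) :
    MvPolynomial (Fin 3) F →ₐ[F] Polynomial F :=
  lineRestrict (Pi.single j x.base + Pi.single 2 x.intercept) (Pi.single i 1 + Pi.single 2 x.slope)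

lemma eval_ruling (i j : Fin 3) (x : LineParam F) (t : F) (P : MvPolynomial (Fin 3) F) :
    (ruling i j x P).eval t =
      eval (Pi.single i t + Pi.single j x.base + Pi.single 2 (x.slope * t + x.intercept)) P := by
  rw [ruling, eval_lineRestrict]
  congr 2
  simp only [smul_add, ← Pi.single_smul, smul_eq_mul, mul_one, Pi.single_add, mul_comm t x.slope]
  abel

lemma Meets.eval_ruling {x y : LineParam F} (h : x.Meets y) (i j : Fin 3)
    (P : MvPolynomial (Fin 3) F) :
    (ruling i j x P).eval y.base = (ruling j i y P).eval x.base := by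
  rw [LineParam.eval_ruling, LineParam.eval_ruling, h, add_comm (Pi.single i _)]

lemma natDegree_ruling_le (i j : Fin 3) (x : LineParam F) (P : MvPolynomial (Fin 3) F) :
    (ruling i j x P).natDegree ≤ P.totalDegree :=
  natDegree_lineRestrict_le _ _ P

lemma derivative_ruling (i j : Fin 3) (x : LineParam F) (P : MvPolynomial (Fin 3) F) :
    Polynomial.derivative (ruling i j x P) =
      ruling i j x (pderiv i P) + Polynomial.C x.slope * ruling i j x (pderiv 2 P) := by
  simp [ruling, derivative_lineRestrict, add_mul, sum_add_distrib, Pi.single_apply,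
    apply_ite Polynomial.C]

lemma ruling_pderiv_of_ruling_eq_zero {i j : Fin 3} {x : LineParam F}
    {Q : MvPolynomial (Fin 3) F} (h : ruling i j x Q = 0) :
    ruling i j x (pderiv i Q) = -(Polynomial.C x.slope * ruling i j x (pderiv 2 Q)) := by
  rw [eq_neg_iff_add_eq_zero, ← derivative_ruling, h, Polynomial.derivative_zero]

end LineParam

open LineParam

lemma exists_totalDegree_le_ruling_eq_zero [Infinite F] (i j : Fin 3) (𝓐 : Finset (LineParam F))
    {d : ℕ} (hd : 3 * #𝓐 ≤ (d + 1) ^ 2) :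
    ∃ Q : MvPolynomial (Fin 3) F, Q ≠ 0 ∧ Q.totalDegree ≤ 3 * d ∧
      ∀ x ∈ 𝓐, ruling i j x Q = 0 := by
  classical
  obtain ⟨Y, hY⟩ := Infinite.exists_subset_card_eq F (3 * d + 1)
  let point (q : LineParam F × F) : Fin 3 → F :=
    Pi.single i q.2 + Pi.single j q.1.base + Pi.single 2 (q.1.slope * q.2 + q.1.intercept)
  have hcard : #((𝓐 ×ˢ Y).image point) < (d + 1) ^ Fintype.card (Fin 3) := by
    calc #((𝓐 ×ˢ Y).image point) ≤ #𝓐 * (3 * d + 1) := by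
          rw [← hY, ← card_product]
          exact card_image_le
      _ < (d + 1) ^ 3 := by nlinarith
      _ = (d + 1) ^ Fintype.card (Fin 3) := by rw [Fintype.card_fin]
  obtain ⟨Q, hQ0, hdeg, hQ⟩ := exists_ne_zero_totalDegree_le_of_card_lt _ hcard
  rw [Fintype.card_fin] at hdeg
  refine ⟨Q, hQ0, hdeg, fun x hx => ?_⟩
  refine Polynomial.eq_zero_of_natDegree_lt_card_of_eval_eq_zero' _ Y (fun t ht => ?_) ?_
  · rw [eval_ruling]
    exact hQ _ (mem_image_of_mem point (mk_mem_product hx ht))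
  · have := natDegree_ruling_le i j x Q
    omega

section TangentialDerivatives

/-- The derivation `∂₂Q · ∂ᵢ - ∂ᵢQ · ∂₂`, which is tangent to the surface `Q = 0`. -/
noncomputable def tangentDeriv (Q : MvPolynomial (Fin 3) F) (i : Fin 3)
    (P : MvPolynomial (Fin 3) F) : MvPolynomial (Fin 3) F :=
  pderiv 2 Q * pderiv i P - pderiv i Q * pderiv 2 P

/-- The coefficients of the second fundamental form of the surface `Q = 0`, up to a factor: for the
graph `z₂ = φ(z₀, z₁)` of a function, `secondForm Q i j` is `-(∂₂Q)³ ∂ᵢ∂ⱼφ`. -/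
noncomputable def secondForm (Q : MvPolynomial (Fin 3) F) (i j : Fin 3) : MvPolynomial (Fin 3) F :=
  pderiv 2 Q * tangentDeriv Q i (pderiv j Q) - pderiv j Q * tangentDeriv Q i (pderiv 2 Q)

-- The Codazzi equation: up to powers of `∂₂Q` it says `∂ᵢ(∂ᵢ∂ⱼφ) = ∂ⱼ(∂ᵢ∂ᵢφ)`.
lemma secondForm_codazzi (Q : MvPolynomial (Fin 3) F) (i j : Fin 3) :
    pderiv 2 Q * tangentDeriv Q i (secondForm Q i j) -
        3 * secondForm Q i j * tangentDeriv Q i (pderiv 2 Q) =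
      pderiv 2 Q * tangentDeriv Q j (secondForm Q i i) -
        3 * secondForm Q i i * tangentDeriv Q j (pderiv 2 Q) := by
  simp only [secondForm, tangentDeriv, map_sub, pderiv_mul, pderiv_pderiv_comm 2 i,
    pderiv_pderiv_comm 2 j, pderiv_pderiv_comm j i]
  ring

lemma totalDegree_mul_sub_mul_le {σ : Type*} {P₁ P₂ Q₁ Q₂ : MvPolynomial σ F} {m n : ℕ}
    (hP₁ : P₁.totalDegree ≤ m) (hP₂ : P₂.totalDegree ≤ n) (hQ₁ : Q₁.totalDegree ≤ m)
    (hQ₂ : Q₂.totalDegree ≤ n) : (P₁ * P₂ - Q₁ * Q₂).totalDegree ≤ m + n :=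
  (totalDegree_sub _ _).trans <| max_le ((totalDegree_mul _ _).trans (add_le_add hP₁ hP₂))
    ((totalDegree_mul _ _).trans (add_le_add hQ₁ hQ₂))

lemma totalDegree_tangentDeriv_le (Q : MvPolynomial (Fin 3) F) (i : Fin 3)
    (P : MvPolynomial (Fin 3) F) :
    (tangentDeriv Q i P).totalDegree ≤ Q.totalDegree + P.totalDegree :=
  totalDegree_mul_sub_mul_le (totalDegree_pderiv_le _ Q) (totalDegree_pderiv_le _ P)
    (totalDegree_pderiv_le _ Q) (totalDegree_pderiv_le _ P)

lemma totalDegree_secondForm_le (Q : MvPolynomial (Fin 3) F) (i j : Fin 3) :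
    (secondForm Q i j).totalDegree ≤ 3 * Q.totalDegree := by
  have hdeg (k : Fin 3) : (tangentDeriv Q i (pderiv k Q)).totalDegree ≤ 2 * Q.totalDegree := by
    have := totalDegree_tangentDeriv_le Q i (pderiv k Q)
    have := totalDegree_pderiv_le k Q
    omega
  refine (totalDegree_mul_sub_mul_le (totalDegree_pderiv_le _ Q) (hdeg j)
    (totalDegree_pderiv_le _ Q) (hdeg 2)).trans_eq (by ring)

variable {i j : Fin 3} {x : LineParam F} {Q : MvPolynomial (Fin 3) F}

lemma ruling_tangentDeriv (h : ruling i j x Q = 0) (P : MvPolynomial (Fin 3) F) :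
    ruling i j x (tangentDeriv Q i P) =
      ruling i j x (pderiv 2 Q) * Polynomial.derivative (ruling i j x P) := by
  rw [tangentDeriv, map_sub, map_mul, map_mul, ruling_pderiv_of_ruling_eq_zero h,
    derivative_ruling]
  ring

lemma ruling_secondForm (h : ruling i j x Q = 0) (k : Fin 3) :
    ruling i j x (secondForm Q i k) = ruling i j x (pderiv 2 Q) *
      Polynomial.wronskian (ruling i j x (pderiv 2 Q)) (ruling i j x (pderiv k Q)) := by
  rw [secondForm, map_sub, map_mul, map_mul, ruling_tangentDeriv h, ruling_tangentDeriv h,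
    Polynomial.wronskian]
  ring

lemma ruling_secondForm_self (h : ruling i j x Q = 0) : ruling i j x (secondForm Q i i) = 0 := by
  rw [ruling_secondForm h, ruling_pderiv_of_ruling_eq_zero h, Polynomial.wronskian]
  simp only [Polynomial.derivative_neg, Polynomial.derivative_C_mul]
  ring

end TangentialDerivatives

variable [DecidableEq F]

/-- A finite set of line parameters in which each line of one family meets at least `T` lines of the
other one, and in which lines with the same base are parallel. -/
structure IsMeetingSystem (𝓐 : Finset (LineParam F)) (T : ℕ) : Prop where
  slope_eq_of_base_eq : ∀ x ∈ 𝓐, ∀ y ∈ 𝓐, x.base = y.base → x.slope = y.slope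
  le_card_meets : ∀ x ∈ 𝓐, T ≤ #{y ∈ 𝓐 | x.Meets y}

namespace IsMeetingSystem

variable {𝓐 : Finset (LineParam F)} {T : ℕ}

lemma injOn_base (h𝓐 : IsMeetingSystem 𝓐 T) (x : LineParam F) :
    Set.InjOn (α := LineParam F) base ({y ∈ 𝓐 | x.Meets y} : Finset (LineParam F)) := by
  intro y hy z hz hbase
  obtain ⟨hy, hxy⟩ := mem_filter.mp hy
  obtain ⟨hz, hxz⟩ := mem_filter.mp hz
  have hslope := h𝓐.slope_eq_of_base_eq y hy z hz hbase
  simp only [Meets, hbase, hslope] at hxy hxz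
  exact LineParam.ext hslope (by linear_combination hxz - hxy) hbase

lemma le_card_bases (h𝓐 : IsMeetingSystem 𝓐 T) {x : LineParam F} (hx : x ∈ 𝓐) :
    T ≤ #({y ∈ 𝓐 | x.Meets y}.image base) :=
  (h𝓐.le_card_meets x hx).trans_eq (card_image_of_injOn (h𝓐.injOn_base x)).symm

-- Each line of one family meets more lines of the other family than the degree of `P`.
lemma ruling_eq_zero_of_ruling_eq_zero (h𝓐 : IsMeetingSystem 𝓐 T) {i j : Fin 3}
    {P : MvPolynomial (Fin 3) F} (hdeg : P.totalDegree < T)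
    (hP : ∀ x ∈ 𝓐, ruling i j x P = 0) : ∀ x ∈ 𝓐, ruling j i x P = 0 := by
  intro x hx
  refine Polynomial.eq_zero_of_natDegree_lt_card_of_eval_eq_zero' _
    ({y ∈ 𝓐 | x.Meets y}.image base) ?_
    ((natDegree_ruling_le j i x P).trans_lt (hdeg.trans_le (h𝓐.le_card_bases hx)))
  intro t ht
  obtain ⟨y, hy, rfl⟩ := mem_image.mp ht
  obtain ⟨hy, hxy⟩ := mem_filter.mp hy
  rw [hxy.eval_ruling, hP y hy, Polynomial.eval_zero]

variable (p : ℕ) [CharP F p] in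
lemma exists_ruling_pderiv_eq_linear_mul (h𝓐 : IsMeetingSystem 𝓐 T) {i j : Fin 3}
    {Q : MvPolynomial (Fin 3) F} (hT : 4 * Q.totalDegree < T) (hp : 2 * Q.totalDegree + 1 < p)
    (hQ : ∀ x ∈ 𝓐, ruling i j x Q = 0) {x : LineParam F} (hx : x ∈ 𝓐)
    (hne : ruling i j x (pderiv 2 Q) ≠ 0) :
    ∃ a b : F, ruling i j x (pderiv j Q) =
      (Polynomial.C a * Polynomial.X + Polynomial.C b) * ruling i j x (pderiv 2 Q) := by
  have hdeg (k : Fin 3) : (ruling i j x (pderiv k Q)).natDegree ≤ Q.totalDegree :=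
    (natDegree_ruling_le i j x _).trans (totalDegree_pderiv_le k Q)
  have hformdeg := totalDegree_secondForm_le Q i i
  have hderivdeg := totalDegree_tangentDeriv_le Q j (secondForm Q i i)
  have hQ' := h𝓐.ruling_eq_zero_of_ruling_eq_zero (by omega) hQ
  have hform : ∀ y ∈ 𝓐, ruling i j y (secondForm Q i i) = 0 :=
    fun y hy => ruling_secondForm_self (hQ y hy)
  have hform' := h𝓐.ruling_eq_zero_of_ruling_eq_zero (by omega) hform
  have hderiv' : ∀ y ∈ 𝓐, ruling j i y (tangentDeriv Q j (secondForm Q i i)) = 0 := fun y hy => by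
    rw [ruling_tangentDeriv (hQ' y hy), hform' y hy, Polynomial.derivative_zero, mul_zero]
  have hderiv := h𝓐.ruling_eq_zero_of_ruling_eq_zero (by omega) hderiv' x hx
  have hcodazzi := congrArg (ruling i j x) (secondForm_codazzi Q i j)
  simp only [map_sub, map_mul, map_ofNat, hderiv, hform x hx, ruling_tangentDeriv (hQ x hx),
    ruling_secondForm (hQ x hx), Polynomial.derivative_mul] at hcodazzi
  refine exists_eq_linear_mul_of_derivative_wronskian p hne (hdeg j) (hdeg 2) hp ?_
  refine mul_left_cancel₀ (pow_ne_zero 2 hne) ?_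
  linear_combination hcodazzi

end IsMeetingSystem

-- If `∂₂Q = 0` then the surface is a cylinder, so it contains the planes `z 1 = x.base`.
variable (p : ℕ) [CharP F p] in
lemma pderiv_two_ne_zero_of_ruling_eq_zero [Infinite F] {𝓐 : Finset (LineParam F)}
    {Q : MvPolynomial (Fin 3) F} (hQ0 : Q ≠ 0) (hp : Q.totalDegree < p)
    (hdeg : Q.totalDegree < #(𝓐.image base)) (hQ : ∀ x ∈ 𝓐, ruling 0 1 x Q = 0) :
    pderiv 2 Q ≠ 0 := by
  intro hpderiv
  refine hQ0 (MvPolynomial.funext fun z => ?_)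
  have hline : lineRestrict (Function.update z 1 0) (Pi.single 1 1) Q = 0 := by
    refine lineRestrict_eq_zero_of_eval_eq_zero _ hdeg fun t ht => ?_
    obtain ⟨x, hx, rfl⟩ := mem_image.mp ht
    have hx0 : (ruling 0 1 x Q).eval (z 0) = 0 := by rw [hQ x hx, Polynomial.eval_zero]
    rw [eval_ruling, ← eval_add_smul_single_of_pderiv_eq_zero p hpderiv hp _
      (z 2 - (x.slope * z 0 + x.intercept))] at hx0
    refine Eq.trans ?_ hx0
    congr 2
    funext k
    fin_cases k <;> simp
  have hz : z = Function.update z 1 0 + z 1 • Pi.single 1 1 := by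
    funext k
    fin_cases k <;> simp
  rw [hz, ← eval_lineRestrict, hline, Polynomial.eval_zero, map_zero]

variable (p : ℕ) [CharP F p] in
lemma exists_ruling_pderiv_two_ne_zero [Infinite F] {𝓐 : Finset (LineParam F)} {d : ℕ}
    (hd : 3 * #𝓐 ≤ (d + 1) ^ 2) (hp : 3 * d < p) (hbase : 3 * d < #(𝓐.image base)) :
    ∃ Q : MvPolynomial (Fin 3) F, Q.totalDegree ≤ 3 * d ∧ (∀ x ∈ 𝓐, ruling 0 1 x Q = 0) ∧
      ∃ x ∈ 𝓐, ruling 0 1 x (pderiv 2 Q) ≠ 0 := by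
  obtain ⟨Q₀, hQ₀, hdeg₀, hvan₀⟩ := exists_totalDegree_le_ruling_eq_zero 0 1 𝓐 hd
  let s : Set (MvPolynomial (Fin 3) F) := {P | P ≠ 0 ∧ ∀ x ∈ 𝓐, ruling 0 1 x P = 0}
  have hs : s.Nonempty := ⟨Q₀, hQ₀, hvan₀⟩
  set Q := Function.argminOn totalDegree s hs
  obtain ⟨hQ, hvan⟩ : Q ∈ s := Function.argminOn_mem totalDegree s hs
  have hmin (P) (hP : P ∈ s) : Q.totalDegree ≤ P.totalDegree :=
    Function.argminOn_le totalDegree s hP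
  have hdeg : Q.totalDegree ≤ 3 * d := (hmin Q₀ ⟨hQ₀, hvan₀⟩).trans hdeg₀
  refine ⟨Q, hdeg, hvan, ?_⟩
  by_contra! hzero
  have hpderiv : pderiv 2 Q ≠ 0 :=
    pderiv_two_ne_zero_of_ruling_eq_zero p hQ (by omega) (by omega) hvan
  exact (hmin _ ⟨hpderiv, hzero⟩).not_gt (totalDegree_pderiv_lt hpderiv)

namespace IsMeetingSystem

variable {𝓐 : Finset (LineParam F)} {T : ℕ}

lemma card_meets_filter_isRoot_le (h𝓐 : IsMeetingSystem 𝓐 T) (x : LineParam F)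
    {f : Polynomial F} (hf : f ≠ 0) :
    #{y ∈ 𝓐 | x.Meets y ∧ f.eval y.base = 0} ≤ f.natDegree := by
  rw [← filter_filter, ← card_image_of_injOn ((h𝓐.injOn_base x).mono (filter_subset _ _))]
  refine Polynomial.card_le_degree_of_subset_roots fun t ht => ?_
  obtain ⟨y, hy, rfl⟩ := mem_image.mp (mem_val.mp ht)
  exact (Polynomial.mem_roots hf).mpr (mem_filter.mp hy).2

variable (p : ℕ) [CharP F p] in
theorem exists_linear_family [Infinite F] (h𝓐 : IsMeetingSystem 𝓐 T) (hne : 𝓐.Nonempty) {d : ℕ}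
    (hd : 3 * #𝓐 ≤ (d + 1) ^ 2) (hT : 12 * d < T) (hp : 6 * d + 1 < p) :
    ∃ a b a' b' : F, T ≤ 3 * d +
      #{y ∈ 𝓐 | y.slope = a * y.base + b ∧ y.intercept = a' * y.base + b'} := by
  obtain ⟨x₀, hx₀⟩ := hne
  have hbases : T ≤ #(𝓐.image base) :=
    (h𝓐.le_card_bases hx₀).trans (card_le_card (image_subset_image (filter_subset _ _)))
  obtain ⟨Q, hdeg, hQ, x, hx, hne⟩ :=
    exists_ruling_pderiv_two_ne_zero p hd (by omega) (by omega)
  obtain ⟨a, b, hab⟩ := h𝓐.exists_ruling_pderiv_eq_linear_mul p (by omega) (by omega) hQ hx hne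
  have hQ' := h𝓐.ruling_eq_zero_of_ruling_eq_zero (by omega) hQ
  set f := ruling 0 1 x (pderiv 2 Q)
  have hfdeg : f.natDegree ≤ 3 * d :=
    (natDegree_ruling_le 0 1 x _).trans ((totalDegree_pderiv_le 2 Q).trans hdeg)
  refine ⟨-a, -b, x.slope + a * x.base, x.intercept + b * x.base,
    (h𝓐.le_card_meets x hx).trans ?_⟩
  rw [← card_filter_add_card_filter_not (s := {y ∈ 𝓐 | x.Meets y}) fun y => f.eval y.base = 0,
    filter_filter]
  refine add_le_add ((h𝓐.card_meets_filter_isRoot_le x hne).trans hfdeg) (card_le_card ?_)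
  intro y hy
  simp only [mem_filter] at hy ⊢
  obtain ⟨⟨hy, hxy⟩, hroot⟩ := hy
  have hslope : y.slope = -a * y.base + -b := by
    have htangent := congrArg (Polynomial.eval x.base)
      (ruling_pderiv_of_ruling_eq_zero (hQ' y hy))
    rw [Polynomial.eval_neg, Polynomial.eval_mul, Polynomial.eval_C, ← hxy.eval_ruling,
      ← hxy.eval_ruling, hab] at htangent
    simp only [Polynomial.eval_mul, Polynomial.eval_add, Polynomial.eval_C,
      Polynomial.eval_X] at htangent
    exact mul_right_cancel₀ hroot (by linear_combination htangent)
  refine ⟨hy, hslope, ?_⟩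
  have hxy' : x.slope * y.base + x.intercept = y.slope * x.base + y.intercept := hxy
  linear_combination -hxy' - x.base * hslope

end IsMeetingSystem

end LineSystems

section RichLines

lemma exists_subset_forall_le_card_filter {α : Type*} (r : α → α → Prop) [DecidableRel r]
    (hr : ∀ x y, r x y → r y x) {T : ℕ} {I : Finset α}
    (hI : 2 * T * #I < ∑ x ∈ I, #{y ∈ I | r x y}) :
    ∃ J ⊆ I, J.Nonempty ∧ ∀ x ∈ J, T ≤ #{y ∈ J | r x y} := by
  classical
  induction I using Finset.strongInduction with
  | H I ih =>
    by_cases hdeg : ∀ x ∈ I, T ≤ #{y ∈ I | r x y}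
    · refine ⟨I, subset_rfl, nonempty_iff_ne_empty.mpr ?_, hdeg⟩
      rintro rfl
      simp at hI
    push Not at hdeg
    obtain ⟨x, hx, hxT⟩ := hdeg
    suffices hsum : 2 * T * #(I.erase x) < ∑ y ∈ I.erase x, #{z ∈ I.erase x | r y z} by
      obtain ⟨J, hJ, hJI⟩ := ih _ (erase_ssubset hx) hsum
      exact ⟨J, hJ.trans (erase_subset x I), hJI⟩
    have hle (y : α) : #{z ∈ I | r y z} ≤ #{z ∈ I.erase x | r y z} + if r y x then 1 else 0 := by
      rw [← insert_erase hx, filter_insert, erase_insert (notMem_erase x I)]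
      split_ifs
      · exact card_insert_le _ _
      · exact le_rfl
    have hcol : #{y ∈ I.erase x | r y x} ≤ #{y ∈ I | r x y} :=
      card_le_card fun y hy => by
        simp only [mem_filter] at hy ⊢
        exact ⟨mem_of_mem_erase hy.1, hr _ _ hy.2⟩
    have hrest : ∑ y ∈ I.erase x, #{z ∈ I | r y z} ≤
        ∑ y ∈ I.erase x, #{z ∈ I.erase x | r y z} + #{y ∈ I.erase x | r y x} := by
      rw [card_filter, ← sum_add_distrib]
      exact sum_le_sum fun y _ => hle y
    rw [← add_sum_erase _ _ hx, ← card_erase_add_one hx, mul_add] at hI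
    omega

section Flags

variable {F : Type*} [DecidableEq F]

/-- The pairs of a line of `𝓛` and an abscissa in `U`, as line parameters. Two of them meet when
the crosswise points of the two lines over the two abscissas are on the same horizontal line. -/
def flags (U : Finset F) (𝓛 : Finset (F × F)) : Finset (LineParam F) :=
  (U ×ˢ 𝓛).image fun z => ⟨z.2.1, z.2.2, z.1⟩

lemma mem_flags {U : Finset F} {𝓛 : Finset (F × F)} {x : LineParam F} :
    x ∈ flags U 𝓛 ↔ x.base ∈ U ∧ (x.slope, x.intercept) ∈ 𝓛 := by
  constructor
  · intro hx
    obtain ⟨z, hz, rfl⟩ := mem_image.mp hx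
    exact mem_product.mp hz
  · rintro ⟨hU, h𝓛⟩
    exact mem_image.mpr ⟨(x.base, x.slope, x.intercept), mk_mem_product hU h𝓛, rfl⟩

lemma card_flags (U : Finset F) (𝓛 : Finset (F × F)) : #(flags U 𝓛) = #U * #𝓛 := by
  rw [flags, card_image_of_injective, card_product]
  rintro ⟨a, c, d⟩ ⟨a', c', d'⟩ h
  simp only [LineParam.mk.injEq] at h
  grind

variable [Field F]

/-- The number of points of the grid `U × U` on the line `y = l.1 * x + l.2`. -/
def richness (U : Finset F) (l : F × F) : ℕ :=
  #{a ∈ U | l.1 * a + l.2 ∈ U}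

lemma richness_le_card (U : Finset F) (l : F × F) : richness U l ≤ #U :=
  card_filter_le _ _

lemma sum_card_flags_filter_eq (U : Finset F) (𝓛 : Finset (F × F)) :
    ∑ b ∈ U, #{x ∈ flags U 𝓛 | x.slope * x.base + x.intercept = b} = ∑ l ∈ 𝓛, richness U l := by
  simp only [richness, ← card_sigma]
  refine card_nbij' (fun s => ⟨(s.2.slope, s.2.intercept), s.2.base⟩)
    (fun s => ⟨s.1.1 * s.2 + s.1.2, ⟨s.1.1, s.1.2, s.2⟩⟩) ?_ ?_ ?_ ?_
  · rintro ⟨b, x⟩ h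
    simp only [mem_coe, mem_sigma, mem_filter, mem_flags] at h ⊢
    obtain ⟨hb, ⟨hU, h𝓛⟩, rfl⟩ := h
    exact ⟨h𝓛, hU, hb⟩
  · rintro ⟨l, a⟩ h
    simp only [mem_coe, mem_sigma, mem_filter, mem_flags] at h ⊢
    exact ⟨h.2.2, ⟨h.2.1, h.1⟩, trivial⟩
  · rintro ⟨b, x⟩ h
    simp only [mem_coe, mem_sigma, mem_filter] at h
    obtain ⟨-, -, rfl⟩ := h
    rfl
  · rintro ⟨l, a⟩ -
    rfl

lemma sum_card_flags_filter_eq_sq_le (U : Finset F) (𝓛 : Finset (F × F)) :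
    ∑ b ∈ U, #{x ∈ flags U 𝓛 | x.slope * x.base + x.intercept = b} ^ 2 ≤
      ∑ x ∈ flags U 𝓛, #{y ∈ flags U 𝓛 | x.Meets y} := by
  simp only [sq, ← card_product]
  rw [← card_sigma, ← card_sigma]
  refine card_le_card_of_injOn (fun s => ⟨⟨s.2.1.slope, s.2.1.intercept, s.2.2.base⟩,
    ⟨s.2.2.slope, s.2.2.intercept, s.2.1.base⟩⟩) ?_ ?_
  · rintro ⟨b, x, y⟩ h
    simp only [mem_coe, mem_sigma, mem_product, mem_filter, mem_flags] at h ⊢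
    obtain ⟨-, ⟨hx, hxb⟩, hy, hyb⟩ := h
    exact ⟨⟨hy.1, hx.2⟩, ⟨hx.1, hy.2⟩, hxb.trans hyb.symm⟩
  · rintro ⟨b, x, y⟩ h ⟨b', x', y'⟩ h' heq
    simp only [mem_coe, mem_sigma, mem_product, mem_filter] at h h'
    obtain ⟨-, ⟨-, rfl⟩, -⟩ := h
    obtain ⟨-, ⟨-, rfl⟩, -⟩ := h'
    simp only [Sigma.mk.injEq, heq_eq_eq, LineParam.mk.injEq] at heq
    obtain ⟨⟨hslope, hint, hbase'⟩, hslope', hint', hbase⟩ := heq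
    obtain rfl : x = x' := LineParam.ext hslope hint hbase
    obtain rfl : y = y' := LineParam.ext hslope' hint' hbase'
    rfl

lemma sq_card_mul_le_card_mul_sum_card_meets {U : Finset F} {𝓛 : Finset (F × F)} {k : ℕ}
    (hk : ∀ l ∈ 𝓛, k ≤ richness U l) :
    (#𝓛 * k) ^ 2 ≤ #U * ∑ x ∈ flags U 𝓛, #{y ∈ flags U 𝓛 | x.Meets y} := by
  let height (b : F) : ℕ := #{x ∈ flags U 𝓛 | x.slope * x.base + x.intercept = b}
  calc (#𝓛 * k) ^ 2 ≤ (∑ b ∈ U, height b) ^ 2 := by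
        rw [sum_card_flags_filter_eq, ← smul_eq_mul]
        exact Nat.pow_le_pow_left (card_nsmul_le_sum 𝓛 _ k hk) 2
    _ ≤ #U * ∑ b ∈ U, height b ^ 2 := sq_sum_le_card_mul_sum_sq
    _ ≤ _ := Nat.mul_le_mul_left _ (sum_card_flags_filter_eq_sq_le U 𝓛)

end Flags

section Shear

variable {F E : Type*} [Field F] [Field E] (φ : F →+* E) (θ : E)

namespace LineParam

/-- The image of line parameters under a field extension and the shear `base ↦ base + θ * slope`.
For generic `θ` it separates lines of different slopes, and it preserves the relation `Meets`. -/
def shear (x : LineParam F) : LineParam E :=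
  ⟨φ x.slope, φ x.intercept, φ x.base + θ * φ x.slope⟩

lemma shear_injective : Function.Injective (shear φ θ) := by
  intro x y h
  simp only [shear, LineParam.mk.injEq] at h
  obtain ⟨hslope, hint, hbase⟩ := h
  rw [hslope, add_left_inj] at hbase
  exact LineParam.ext (φ.injective hslope) (φ.injective hint) (φ.injective hbase)

lemma shear_meets_shear {x y : LineParam F} : (x.shear φ θ).Meets (y.shear φ θ) ↔ x.Meets y := by
  rw [Meets, Meets, ← φ.injective.eq_iff]
  simp only [shear, map_add, map_mul]
  constructor <;> intro h <;> linear_combination h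

variable {θ} in
lemma slope_eq_of_shear_base_eq (hθ : θ ∉ Set.range φ) {x y : LineParam F}
    (h : (x.shear φ θ).base = (y.shear φ θ).base) : x.slope = y.slope := by
  by_contra hne
  have hsub : φ x.slope - φ y.slope ≠ 0 := sub_ne_zero.mpr (φ.injective.ne hne)
  refine hθ ⟨(y.base - x.base) / (x.slope - y.slope), ?_⟩
  simp only [shear] at h
  rw [map_div₀, map_sub, map_sub, div_eq_iff hsub]
  linear_combination -h

end LineParam

variable {θ}

lemma card_linear_family_le {I : Finset (LineParam F)} {U : Finset F} {a b a' b' : E}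
    (hI : ∀ x ∈ I, x.base ∈ U) (ha : a * θ ≠ 1)
    (hslope : ∀ x ∈ I, (x.shear φ θ).slope = a * (x.shear φ θ).base + b)
    (hint : ∀ x ∈ I, (x.shear φ θ).intercept = a' * (x.shear φ θ).base + b') : #I ≤ #U := by
  refine card_le_card_of_injOn LineParam.base hI fun x hx y hy hbase => ?_
  have hx₁ := hslope x hx
  have hx₂ := hint x hx
  have hy₁ := hslope y hy
  have hy₂ := hint y hy
  simp only [LineParam.shear, hbase] at hx₁ hx₂ hy₁ hy₂
  have hs : φ x.slope = φ y.slope :=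
    mul_right_cancel₀ (sub_ne_zero.mpr ha) (by linear_combination hy₁ - hx₁)
  rw [hs, ← hy₂] at hx₂
  exact LineParam.ext (φ.injective hs) (φ.injective hx₂) hbase

variable [DecidableEq F]

lemma card_mul_le_of_concurrent {U : Finset F} {𝓛 : Finset (F × F)} {k : ℕ}
    (hk : ∀ l ∈ 𝓛, k ≤ richness U l) (x y : E) (h : ∀ l ∈ 𝓛, φ l.1 * x + φ l.2 = y) :
    #𝓛 * k ≤ #U ^ 2 + #𝓛 := by
  classical
  let away (l : F × F) : Finset F := {a ∈ U | l.1 * a + l.2 ∈ U ∧ φ a ≠ x}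
  have haway (l) (hl : l ∈ 𝓛) : k ≤ #(away l) + 1 := by
    refine (hk l hl).trans ?_
    rw [richness, ← card_filter_add_card_filter_not (fun a => φ a ≠ x), filter_filter]
    refine Nat.add_le_add_left (card_le_one.mpr fun a ha b hb => φ.injective ?_) _
    simp only [mem_filter, not_not] at ha hb
    exact ha.2.trans hb.2.symm
  have hcount : ∑ l ∈ 𝓛, #(away l) ≤ #U ^ 2 := by
    rw [← card_sigma, sq, ← card_product]
    refine card_le_card_of_injOn (fun s => (s.2, s.1.1 * s.2 + s.1.2)) ?_ ?_
    · rintro ⟨l, a⟩ hs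
      simp only [away, mem_coe, mem_sigma, mem_filter, mem_product] at hs ⊢
      exact ⟨hs.2.1, hs.2.2.1⟩
    · rintro ⟨⟨c, d⟩, a⟩ hs ⟨⟨c', d'⟩, a'⟩ hs' heq
      simp only [away, mem_coe, mem_sigma, mem_filter] at hs hs'
      simp only [Prod.mk.injEq] at heq
      obtain ⟨rfl, heq⟩ := heq
      have hφ : φ c * φ a + φ d = φ c' * φ a + φ d' := by simpa using congrArg φ heq
      obtain rfl : c = c' := by
        refine φ.injective (mul_right_cancel₀ (sub_ne_zero.mpr hs.2.2.2) ?_)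
        linear_combination hφ - h _ hs.1 + h _ hs'.1
      obtain rfl : d = d' := by linear_combination heq
      rfl
  calc #𝓛 * k ≤ ∑ l ∈ 𝓛, (#(away l) + 1) := by
        rw [← smul_eq_mul]
        exact card_nsmul_le_sum 𝓛 _ k haway
    _ ≤ #U ^ 2 + #𝓛 := by
        rw [sum_add_distrib, sum_const, smul_eq_mul, mul_one]
        exact Nat.add_le_add_right hcount _

-- All the parameters have the same base, and the lines pass through one point.
lemma card_linear_family_mul_le {I : Finset (LineParam F)} {U : Finset F} {a b a' b' : E} {k : ℕ}
    (hk : ∀ x ∈ I, k ≤ richness U (x.slope, x.intercept)) (ha : a * θ = 1)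
    (hslope : ∀ x ∈ I, (x.shear φ θ).slope = a * (x.shear φ θ).base + b)
    (hint : ∀ x ∈ I, (x.shear φ θ).intercept = a' * (x.shear φ θ).base + b') :
    #I * k ≤ #U ^ 2 + #I := by
  simp only [LineParam.shear] at hslope hint
  have hbase (x) (hx : x ∈ I) : φ x.base = -b * θ := by
    linear_combination -θ * hslope x hx + (-φ x.base - θ * φ x.slope) * ha
  have hinj : Set.InjOn (fun x : LineParam F => (x.slope, x.intercept)) I := by
    intro x hx y hy h
    simp only [Prod.mk.injEq] at h
    exact LineParam.ext h.1 h.2 (φ.injective ((hbase x hx).trans (hbase y hy).symm))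
  rw [← card_image_of_injOn hinj]
  refine card_mul_le_of_concurrent φ (by simpa only [forall_mem_image] using hk) (-a' * θ)
    (b' - a' * b * θ) ?_
  simp only [forall_mem_image]
  intro x hx
  linear_combination hint x hx + a' * hbase x hx

variable [DecidableEq E]

lemma isMeetingSystem_image_shear (hθ : θ ∉ Set.range φ) {J : Finset (LineParam F)} {T : ℕ}
    (hJ : ∀ x ∈ J, T ≤ #{y ∈ J | x.Meets y}) :
    IsMeetingSystem (J.image (LineParam.shear φ θ)) T where
  slope_eq_of_base_eq := by
    simp only [forall_mem_image]
    intro x _ y _ h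
    exact congrArg φ (LineParam.slope_eq_of_shear_base_eq φ hθ h)
  le_card_meets := by
    simp only [forall_mem_image, filter_image, LineParam.shear_meets_shear]
    intro x hx
    rw [card_image_of_injective _ (LineParam.shear_injective φ θ)]
    exact hJ x hx

end Shear

lemma ratFunc_X_notMem_range_algebraMap (F : Type*) [Field F] :
    (RatFunc.X : RatFunc F) ∉ Set.range (algebraMap F (RatFunc F)) := by
  rintro ⟨c, hc⟩
  rw [← RatFunc.algebraMap_X, IsScalarTower.algebraMap_apply F (Polynomial F) (RatFunc F)] at hc
  exact Polynomial.X_ne_C c (RatFunc.algebraMap_injective F hc).symm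

lemma mul_pow_three_lt_mul_sq {c q m k : ℕ} (hkq : k ≤ q) (h : c * q ^ 5 < m * k ^ 4) :
    c * q ^ 3 < m * k ^ 2 := by
  refine lt_of_mul_lt_mul_right (a := q ^ 2) ?_ (Nat.zero_le _)
  calc c * q ^ 3 * q ^ 2 = c * q ^ 5 := by ring
    _ < m * k ^ 2 * k ^ 2 := by linarith
    _ ≤ m * k ^ 2 * q ^ 2 := by gcongr

lemma exists_richLines_parameters {q m k p : ℕ} (hkq : k ≤ q) (hp : 200 * (q * m) ≤ p ^ 2)
    (h : 2 ^ 15 * q ^ 5 < m * k ^ 4) :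
    ∃ T d : ℕ, 3 * (q * m) ≤ (d + 1) ^ 2 ∧ 12 * d < T ∧ 6 * d + 1 < p ∧
      T * (4 * q ^ 2) ≤ m * k ^ 2 ∧ 4 * q ^ 2 < T * k := by
  have hm : 0 < m := pos_of_mul_pos_left (Nat.zero_lt_of_lt h) (Nat.zero_le _)
  have hk : 0 < k := Nat.pos_of_ne_zero (by rintro rfl; simp at h)
  have hq : 0 < q := hk.trans_le hkq
  let T := m * k ^ 2 / (4 * q ^ 2)
  let d := Nat.sqrt (3 * (q * m))
  have hT : T * (4 * q ^ 2) ≤ m * k ^ 2 := Nat.div_mul_le_self _ _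
  have hmk : 2 ^ 15 * q ^ 3 < m * k ^ 2 := mul_pow_three_lt_mul_sq hkq h
  have hT_pos : 0 < T := by
    refine Nat.div_pos (le_trans ?_ hmk.le) (by positivity)
    calc 4 * q ^ 2 ≤ 2 ^ 15 * q ^ 2 * q := by nlinarith [pow_pos hq 2]
      _ = 2 ^ 15 * q ^ 3 := by ring
  have hmkT : m * k ^ 2 ≤ 8 * q ^ 2 * T := by
    have : m * k ^ 2 < T * (4 * q ^ 2) + 4 * q ^ 2 :=
      Nat.lt_div_mul_add (by positivity)
    have : 4 * q ^ 2 ≤ 4 * q ^ 2 * T := Nat.le_mul_of_pos_right _ hT_pos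
    linarith
  have hTqm : 2 ^ 9 * (m * q) < T ^ 2 := by
    refine lt_of_mul_lt_mul_left (a := 64 * q ^ 4) ?_ (Nat.zero_le _)
    calc 64 * q ^ 4 * (2 ^ 9 * (m * q)) = m * (2 ^ 15 * q ^ 5) := by ring
      _ < m * (m * k ^ 4) := by gcongr
      _ = (m * k ^ 2) ^ 2 := by ring
      _ ≤ (8 * q ^ 2 * T) ^ 2 := by gcongr
      _ = 64 * q ^ 4 * T ^ 2 := by ring
  have hTk : 4 * q ^ 2 < T * k := by
    refine lt_of_mul_lt_mul_left (a := 8 * q ^ 2 * q) ?_ (Nat.zero_le _)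
    calc 8 * q ^ 2 * q * (4 * q ^ 2) ≤ 2 ^ 15 * q ^ 5 := by nlinarith [pow_pos hq 5]
      _ < m * k ^ 2 * k ^ 2 := by linarith
      _ ≤ 8 * q ^ 2 * T * k ^ 2 := by gcongr
      _ = 8 * q ^ 2 * k * (T * k) := by ring
      _ ≤ 8 * q ^ 2 * q * (T * k) := by gcongr
  have hd : d ^ 2 ≤ 3 * (q * m) := Nat.sqrt_le' _
  have hd1 : 1 ≤ d := Nat.sqrt_pos.mpr (by positivity)
  refine ⟨T, d, (Nat.lt_succ_sqrt' _).le, ?_, ?_, hT, hTk⟩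
  · exact lt_of_pow_lt_pow_left₀ 2 (Nat.zero_le T) (by nlinarith)
  · have : 7 * d < p := lt_of_pow_lt_pow_left₀ 2 (Nat.zero_le p) (by nlinarith)
    omega

section Bounds

variable {F : Type*} [Field F] [DecidableEq F] (p : ℕ) [CharP F p]

lemma exists_linear_family_flags {J : Finset (LineParam F)} (hne : J.Nonempty) {T d : ℕ}
    (hJ : ∀ x ∈ J, T ≤ #{y ∈ J | x.Meets y}) (hd : 3 * #J ≤ (d + 1) ^ 2) (hT : 12 * d < T)
    (hp : 6 * d + 1 < p) :
    ∃ I ⊆ J, T ≤ 3 * d + #I ∧ ∃ a b a' b' : RatFunc F, ∀ x ∈ I,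
      (x.shear (algebraMap F (RatFunc F)) RatFunc.X).slope =
        a * (x.shear (algebraMap F (RatFunc F)) RatFunc.X).base + b ∧
      (x.shear (algebraMap F (RatFunc F)) RatFunc.X).intercept =
        a' * (x.shear (algebraMap F (RatFunc F)) RatFunc.X).base + b' := by
  classical
  let φ := algebraMap F (RatFunc F)
  have : Infinite (RatFunc F) := Infinite.of_injective _ (RatFunc.algebraMap_injective F)
  have : CharP (RatFunc F) p := charP_of_injective_algebraMap φ.injective p
  obtain ⟨a, b, a', b', hT'⟩ :=
    (isMeetingSystem_image_shear φ (ratFunc_X_notMem_range_algebraMap F) hJ).exists_linear_family p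
      (hne.image _) (hd.trans' (Nat.mul_le_mul_left 3 card_image_le)) hT hp
  rw [filter_image, card_image_of_injective _ (LineParam.shear_injective φ RatFunc.X)] at hT'
  exact ⟨_, filter_subset _ J, hT', a, b, a', b', fun x hx => (mem_filter.mp hx).2⟩

variable {p}

theorem card_mul_richness_pow_le {U : Finset F} {𝓛 : Finset (F × F)} {k : ℕ} (hk₂ : 2 ≤ k)
    (hk : ∀ l ∈ 𝓛, k ≤ richness U l) (hp : 200 * (#U * #𝓛) ≤ p ^ 2) :
    #𝓛 * k ^ 4 ≤ 2 ^ 15 * #U ^ 5 := by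
  by_contra! hlt
  have h𝓛 : 0 < #𝓛 := pos_of_mul_pos_left (Nat.zero_lt_of_lt hlt) (Nat.zero_le _)
  have hk_le : k ≤ #U := by
    obtain ⟨l, hl⟩ := card_pos.mp h𝓛
    exact (hk l hl).trans (richness_le_card U l)
  obtain ⟨T, d, hd, hdT, hdp, hT, hTk⟩ := exists_richLines_parameters hk_le hp hlt
  obtain ⟨J, hJ, hne, hmeets⟩ := exists_subset_forall_le_card_filter LineParam.Meets
    (fun _ _ => Eq.symm) (T := T) (I := flags U 𝓛) <| by
      refine lt_of_mul_lt_mul_left (a := #U) ?_ (Nat.zero_le _)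
      refine lt_of_lt_of_le ?_ (sq_card_mul_le_card_mul_sum_card_meets hk)
      rw [card_flags]
      have hle : #𝓛 * (T * (4 * #U ^ 2)) ≤ #𝓛 * (#𝓛 * k ^ 2) := Nat.mul_le_mul_left _ hT
      have hpos : 0 < (#𝓛 * k) ^ 2 := by positivity
      linarith
  have hJd : 3 * #J ≤ (d + 1) ^ 2 :=
    (Nat.mul_le_mul_left 3 ((card_le_card hJ).trans_eq (card_flags U 𝓛))).trans hd
  obtain ⟨I, hIJ, hTI, a, b, a', b', hI⟩ := exists_linear_family_flags p hne hmeets hJd hdT hdp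
  have hIf (x) (hx : x ∈ I) := mem_flags.mp (hJ (hIJ hx))
  have hslope := fun x hx => (hI x hx).1
  have hint := fun x hx => (hI x hx).2
  by_cases ha : a * RatFunc.X = 1
  · have hle := card_linear_family_mul_le _ (fun x hx => hk _ (hIf x hx).2) ha hslope hint
    nlinarith
  · have hle := card_linear_family_le _ (fun x hx => (hIf x hx).1) ha hslope hint
    nlinarith

theorem card_mul_richness_pow_le_or {U : Finset F} {𝓛 : Finset (F × F)} {k : ℕ} (hk₂ : 2 ≤ k)
    (hk : ∀ l ∈ 𝓛, k ≤ richness U l) :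
    #𝓛 * k ^ 4 ≤ 2 ^ 15 * #U ^ 5 ∨ p ^ 2 * k ^ 4 ≤ 2 ^ 24 * #U ^ 6 := by
  refine or_iff_not_imp_left.mpr fun hlt => ?_
  have hlarge : p ^ 2 < 200 * (#U * #𝓛) :=
    lt_of_not_ge fun hp => hlt (card_mul_richness_pow_le hk₂ hk hp)
  have hU : 0 < #U := Nat.pos_of_ne_zero fun h => by simp [h] at hlarge
  let m := p ^ 2 / (200 * #U)
  have hm : m ≤ #𝓛 := Nat.div_le_of_le_mul (by linarith)
  obtain ⟨𝓛', h𝓛', hcard⟩ := exists_subset_card_eq hm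
  have hbound := card_mul_richness_pow_le (p := p) hk₂ (fun l hl => hk l (h𝓛' hl)) (by
    rw [hcard, ← mul_assoc]
    exact Nat.mul_div_le _ _)
  rw [hcard] at hbound
  have hk_le : k ≤ #U := by
    obtain ⟨l, hl⟩ : 𝓛.Nonempty := card_pos.mp (Nat.pos_of_ne_zero fun h => by simp [h] at hlarge)
    exact (hk l hl).trans (richness_le_card U l)
  have hp : p ^ 2 ≤ 200 * #U * m + 200 * #U := by
    have : p ^ 2 < m * (200 * #U) + 200 * #U := Nat.lt_div_mul_add (by positivity)
    linarith
  calc p ^ 2 * k ^ 4 ≤ (200 * #U * m + 200 * #U) * k ^ 4 := by gcongr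
    _ = 200 * #U * (m * k ^ 4) + 200 * #U * k ^ 4 := by ring
    _ ≤ 200 * #U * (2 ^ 15 * #U ^ 5) + 200 * #U * #U ^ 4 := by gcongr
    _ ≤ 2 ^ 24 * #U ^ 6 := by nlinarith [pow_pos hU 5]

end Bounds

end RichLines

section PopularRatios

lemma sum_sum_Ioc_eq_sum_card_smul {α M : Type*} [AddCommMonoid M] (s : Finset α) (f : α → ℕ)
    (g : ℕ → M) (k : ℕ) {N : ℕ} (hf : ∀ x ∈ s, f x ≤ N) :
    ∑ x ∈ s, ∑ j ∈ Ioc k (f x), g j = ∑ j ∈ Ioc k N, #{x ∈ s | j ≤ f x} • g j := by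
  simp only [← sum_const]
  refine sum_comm' fun x j => ?_
  simp only [mem_Ioc, mem_filter]
  constructor
  · rintro ⟨hx, hk, hj⟩
    exact ⟨⟨hx, hj⟩, hk, hj.trans (hf x hx)⟩
  · rintro ⟨⟨hx, hj⟩, hk, -⟩
    exact ⟨hx, hk, hj⟩

lemma exists_le_mul_pow_three_le {n M : ℕ} (hn : 0 < n) (hnM : n ≤ M) :
    ∃ k, M ≤ n * k ^ 3 ∧ n * k ^ 3 ≤ 8 * M := by
  have hex : ∃ k, M ≤ n * (k + 1) ^ 3 :=
    ⟨M, (Nat.le_self_pow three_ne_zero _).trans' M.le_succ |>.trans (Nat.le_mul_of_pos_left _ hn)⟩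
  refine ⟨Nat.find hex + 1, Nat.find_spec hex, ?_⟩
  rcases Nat.eq_zero_or_pos (Nat.find hex) with h | h
  · rw [h]
    omega
  · have hlt := Nat.find_min hex (Nat.sub_one_lt_of_lt h)
    rw [Nat.sub_add_cancel h, not_le] at hlt
    calc n * (Nat.find hex + 1) ^ 3 ≤ n * (2 * Nat.find hex) ^ 3 := by gcongr; omega
      _ = 8 * (n * Nat.find hex ^ 3) := by ring
      _ ≤ 8 * M := by gcongr

/-- The number of representations of `x` as a ratio of two elements of `A`, for `0 ∉ A`. -/
def ratioRep {F : Type*} [Mul F] [DecidableEq F] (A : Finset F) (x : F) : ℕ :=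
  #{b ∈ A | x * b ∈ A}

lemma ratioRep_le_card {F : Type*} [Mul F] [DecidableEq F] (A : Finset F) (x : F) :
    ratioRep A x ≤ #A :=
  card_filter_le _ _

variable {F : Type*} [Field F] [DecidableEq F]

lemma sum_ratioRep_le_sq_card {A : Finset F} (hA : 0 ∉ A) (S : Finset F) :
    ∑ x ∈ S, ratioRep A x ≤ #A ^ 2 := by
  simp only [ratioRep]
  rw [← card_sigma, sq, ← card_product]
  refine card_le_card_of_injOn (fun s => (s.2, s.1 * s.2)) ?_ ?_
  · rintro ⟨x, b⟩ h
    simpa only [mem_coe, mem_sigma, mem_filter, mem_product] using (mem_sigma.mp h).2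
  · rintro ⟨x, b⟩ h ⟨x', b'⟩ - heq
    simp only [mem_coe, mem_sigma, mem_filter] at h
    simp only [Prod.mk.injEq] at heq
    obtain ⟨rfl, heq⟩ := heq
    obtain rfl := mul_right_cancel₀ (ne_of_mem_of_not_mem h.2.1 hA) heq
    rfl

/-- The lines of slope in `S` through a point of `A × A`. -/
def linesThrough (A S : Finset F) : Finset (F × F) :=
  (S ×ˢ A ×ˢ A).image fun z => (z.1, z.2.1 - z.1 * z.2.2)

lemma sum_richness_linesThrough (A S : Finset F) :
    ∑ l ∈ linesThrough A S, richness A l = #S * #A ^ 2 := by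
  simp only [richness]
  rw [sq, ← card_product, ← card_product, ← card_sigma]
  refine card_nbij' (fun s => (s.1.1, s.1.1 * s.2 + s.1.2, s.2))
    (fun z => ⟨(z.1, z.2.1 - z.1 * z.2.2), z.2.2⟩) ?_ ?_ ?_ ?_
  · rintro ⟨l, a⟩ h
    simp only [linesThrough, mem_coe, mem_sigma, mem_filter, mem_product, mem_image] at h ⊢
    obtain ⟨⟨z, hz, rfl⟩, ha, hb⟩ := h
    exact ⟨hz.1, hb, ha⟩
  · rintro ⟨x, c, a⟩ h
    have hline := mem_image_of_mem (fun z : F × F × F => (z.1, z.2.1 - z.1 * z.2.2)) h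
    simp only [mem_coe, mem_product] at h
    simp only [mem_coe, mem_sigma, mem_filter, add_sub_cancel]
    exact ⟨hline, h.2.2, h.2.1⟩
  · rintro ⟨l, a⟩ -
    simp only [add_sub_cancel_left]
  · rintro ⟨x, c, a⟩ -
    simp only [add_sub_cancel]

lemma le_richness_of_mem_linesThrough {A S : Finset F} {t : ℕ} (hS : ∀ x ∈ S, t ≤ ratioRep A x)
    {l : F × F} (hl : l ∈ linesThrough A S) : t ≤ richness (A + A) l := by
  obtain ⟨⟨x, c, c'⟩, hz, rfl⟩ := mem_image.mp hl
  simp only [mem_product] at hz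
  refine (hS x hz.1).trans (card_le_card_of_injOn (· + c') ?_ (add_left_injective c').injOn)
  intro b hb
  simp only [mem_coe, mem_filter] at hb ⊢
  refine ⟨add_mem_add hb.1 hz.2.2, ?_⟩
  convert add_mem_add hb.2 hz.2.1 using 1
  ring

variable {p : ℕ} [CharP F p]

lemma card_filter_le_richness_mul_le {U : Finset F} {𝓛 : Finset (F × F)} {k j : ℕ} (hk : 0 < k)
    (hp : 200 * (#U * ∑ l ∈ 𝓛, richness U l) ≤ k * p ^ 2) (hkj : k < j) :
    #{l ∈ 𝓛 | j ≤ richness U l} * j ^ 4 ≤ 2 ^ 15 * #U ^ 5 := by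
  refine card_mul_richness_pow_le (by omega) (fun l hl => (mem_filter.mp hl).2) ?_
  have hsum : #{l ∈ 𝓛 | j ≤ richness U l} * j ≤ ∑ l ∈ 𝓛, richness U l := by
    rw [← smul_eq_mul]
    exact (card_nsmul_le_sum _ _ j fun l hl => (mem_filter.mp hl).2).trans
      (sum_le_sum_of_subset (filter_subset _ 𝓛))
  refine Nat.le_of_mul_le_mul_left ?_ hk
  calc k * (200 * (#U * #{l ∈ 𝓛 | j ≤ richness U l}))
      ≤ j * (200 * (#U * #{l ∈ 𝓛 | j ≤ richness U l})) := by gcongr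
    _ = 200 * (#U * (#{l ∈ 𝓛 | j ≤ richness U l} * j)) := by ring
    _ ≤ 200 * (#U * ∑ l ∈ 𝓛, richness U l) := by gcongr
    _ ≤ k * p ^ 2 := hp

lemma sum_richness_sub_mul_le {U : Finset F} {𝓛 : Finset (F × F)} {k : ℕ} (hk : 0 < k)
    (hp : 200 * (#U * ∑ l ∈ 𝓛, richness U l) ≤ k * p ^ 2) :
    (∑ l ∈ 𝓛, (richness U l - k)) * k ^ 3 ≤ 2 ^ 15 * #U ^ 5 := by
  have hterm (j : ℕ) (hj : k < j) : (#{l ∈ 𝓛 | j ≤ richness U l} : ℝ) ≤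
      2 ^ 15 * #U ^ 5 / k ^ 2 * ((j : ℝ) ^ 2)⁻¹ := by
    have hk₀ : (0 : ℝ) < k := mod_cast hk
    have hkj : (k : ℝ) ≤ j := mod_cast hj.le
    have hj₀ : (0 : ℝ) < j := hk₀.trans_le hkj
    rw [← div_eq_mul_inv, div_div, le_div_iff₀ (by positivity)]
    calc (#{l ∈ 𝓛 | j ≤ richness U l} : ℝ) * ((k : ℝ) ^ 2 * (j : ℝ) ^ 2)
        ≤ #{l ∈ 𝓛 | j ≤ richness U l} * ((j : ℝ) ^ 2 * (j : ℝ) ^ 2) := by gcongr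
      _ = #{l ∈ 𝓛 | j ≤ richness U l} * (j : ℝ) ^ 4 := by ring
      _ ≤ 2 ^ 15 * (#U : ℝ) ^ 5 := mod_cast card_filter_le_richness_mul_le hk hp hj
  have hlayer : ∑ l ∈ 𝓛, (richness U l - k) =
      ∑ j ∈ Ioc k (max k #U), #{l ∈ 𝓛 | j ≤ richness U l} := by
    simpa using sum_sum_Ioc_eq_sum_card_smul (N := max k #U) 𝓛 (richness U) (fun _ => (1 : ℕ)) k
      fun l _ => (richness_le_card U l).trans (le_max_right _ _)
  have hbound : ((∑ l ∈ 𝓛, (richness U l - k) : ℕ) : ℝ) ≤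
      2 ^ 15 * (#U : ℝ) ^ 5 / k ^ 2 * (k : ℝ)⁻¹ := by
    rw [hlayer, Nat.cast_sum]
    refine (sum_le_sum fun j hj => hterm j (mem_Ioc.mp hj).1).trans ?_
    rw [← mul_sum]
    gcongr
    exact (sum_Ioc_inv_sq_le_sub hk.ne' (le_max_left _ _)).trans (sub_le_self _ (by positivity))
  rw [← div_eq_mul_inv, div_div, ← pow_succ, le_div_iff₀ (by positivity)] at hbound
  exact_mod_cast hbound

lemma card_mul_sq_card_le {A S : Finset F} {k : ℕ} (hk : 0 < k)
    (hp : 200 * (#S * #A ^ 3) ≤ k * p ^ 2) (hk₃ : 2 ^ 16 * #A ^ 3 ≤ #S * k ^ 3) :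
    #S * #A ^ 2 ≤ 2 * k * #(linesThrough A S) := by
  have htail := sum_richness_sub_mul_le (U := A) (𝓛 := linesThrough A S) hk (by
    rw [sum_richness_linesThrough]
    linarith)
  have hsum : #S * #A ^ 2 ≤
      k * #(linesThrough A S) + ∑ l ∈ linesThrough A S, (richness A l - k) := by
    rw [← sum_richness_linesThrough, mul_comm, ← smul_eq_mul, ← sum_const, ← sum_add_distrib]
    exact sum_le_sum fun l _ => by omega
  have htail' : 2 * ∑ l ∈ linesThrough A S, (richness A l - k) ≤ #S * #A ^ 2 := by
    refine le_of_mul_le_mul_right ?_ (pow_pos hk 3)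
    nlinarith [Nat.mul_le_mul_right (#A ^ 2) hk₃]
  linarith

lemma exists_popularRatios_parameter {n a t : ℕ} (hta : t ≤ a) (hnt : n * t ≤ a ^ 2)
    (h : 2 ^ 19 * a ^ 3 < n * t ^ 3) :
    2 ≤ t ∧ ∃ k, 0 < k ∧ 200 * n ≤ k * a ∧ 2 ^ 16 * a ^ 3 ≤ n * k ^ 3 ∧
      n * k ^ 3 ≤ 2 ^ 19 * a ^ 3 := by
  have hpos : 0 < n * t ^ 3 := Nat.zero_lt_of_lt h
  have hn : 0 < n := pos_of_mul_pos_left hpos (Nat.zero_le _)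
  have ht : 0 < t := Nat.pos_of_ne_zero (by rintro rfl; simp at hpos)
  have ha : 0 < a := ht.trans_le hta
  have ha₃ : a ^ 2 ≤ a ^ 3 := Nat.pow_le_pow_right ha (by norm_num)
  have ht₂ : 2 ≤ t := by
    by_contra! ht₁
    obtain rfl : t = 1 := by omega
    have : 0 < a ^ 2 := pow_pos ha 2
    omega
  have hna : 2 ^ 19 * n ^ 2 ≤ a ^ 3 := by
    refine Nat.le_of_mul_le_mul_left ?_ (pow_pos ha 3)
    calc a ^ 3 * (2 ^ 19 * n ^ 2) = n ^ 2 * (2 ^ 19 * a ^ 3) := by ring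
      _ ≤ n ^ 2 * (n * t ^ 3) := by gcongr
      _ = (n * t) ^ 3 := by ring
      _ ≤ (a ^ 2) ^ 3 := by gcongr
      _ = a ^ 3 * a ^ 3 := by ring
  obtain ⟨k, hk, hk'⟩ := exists_le_mul_pow_three_le hn (M := 2 ^ 16 * a ^ 3)
    (((Nat.le_mul_of_pos_right n ht).trans hnt).trans (by omega))
  refine ⟨ht₂, k, Nat.pos_of_ne_zero (by rintro rfl; simp at hk; omega), ?_, hk, by omega⟩
  refine le_of_pow_le_pow_left₀ three_ne_zero (Nat.zero_le _) (Nat.le_of_mul_le_mul_left ?_ hn)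
  calc n * (200 * n) ^ 3 = 200 ^ 3 * n ^ 4 := by ring
    _ ≤ 2 ^ 38 * n ^ 4 := Nat.mul_le_mul_right _ (by norm_num)
    _ = (2 ^ 19 * n ^ 2) ^ 2 := by ring
    _ ≤ (a ^ 3) ^ 2 := by gcongr
    _ = a ^ 3 * a ^ 3 := sq _
    _ ≤ n * k ^ 3 * a ^ 3 := by gcongr; omega
    _ = n * (k * a) ^ 3 := by ring

theorem card_popularRatios_le {A S : Finset F} {t : ℕ} (hA : 0 ∉ A) (hp : #A ^ 2 ≤ p)
    (hS : ∀ x ∈ S, t ≤ ratioRep A x) :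
    #S ^ 4 * t ^ 12 * #A ^ 3 ≤ 2 ^ 76 * #(A + A) ^ 15 := by
  rcases S.eq_empty_or_nonempty with rfl | ⟨x, hx⟩
  · simp
  rcases A.eq_empty_or_nonempty with rfl | hAne
  · simp
  have hta : t ≤ #A := (hS x hx).trans (ratioRep_le_card A x)
  have hAA : #A ≤ #(A + A) := card_le_card_add_right hAne
  have hnt : #S * t ≤ #A ^ 2 := by
    rw [← smul_eq_mul]
    exact (card_nsmul_le_sum S _ t hS).trans (sum_ratioRep_le_sq_card hA S)
  rcases le_or_gt (#S * t ^ 3) (2 ^ 19 * #A ^ 3) with htriv | hbig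
  · calc #S ^ 4 * t ^ 12 * #A ^ 3 = (#S * t ^ 3) ^ 4 * #A ^ 3 := by ring
      _ ≤ (2 ^ 19 * #A ^ 3) ^ 4 * #A ^ 3 := by gcongr
      _ = 2 ^ 76 * #A ^ 15 := by ring
      _ ≤ 2 ^ 76 * #(A + A) ^ 15 := by gcongr
  obtain ⟨ht, k, hk, hka, hk₃, hk₃'⟩ := exists_popularRatios_parameter hta hnt hbig
  have hp₄ : #A ^ 4 ≤ p ^ 2 := by
    calc #A ^ 4 = (#A ^ 2) ^ 2 := by ring
      _ ≤ p ^ 2 := by gcongr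
  rcases card_mul_richness_pow_le_or (p := p) ht
    (fun l hl => le_richness_of_mem_linesThrough hS hl) with hlines | hlarge
  · have hSA : #S * #A ^ 2 ≤ 2 * k * #(linesThrough A S) := card_mul_sq_card_le hk
      (by nlinarith [Nat.mul_le_mul_right (#A ^ 3) hka, Nat.mul_le_mul_left k hp₄]) hk₃
    refine Nat.le_of_mul_le_mul_left ?_ (pow_pos hAne.card_pos 3)
    calc #A ^ 3 * (#S ^ 4 * t ^ 12 * #A ^ 3) = #S * (#S * #A ^ 2 * t ^ 4) ^ 3 := by ring
      _ ≤ #S * (2 * k * #(linesThrough A S) * t ^ 4) ^ 3 := by gcongr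
      _ = #S * (2 * k * (#(linesThrough A S) * t ^ 4)) ^ 3 := by ring
      _ ≤ #S * (2 * k * (2 ^ 15 * #(A + A) ^ 5)) ^ 3 := by gcongr
      _ = 2 ^ 48 * (#S * k ^ 3) * #(A + A) ^ 15 := by ring
      _ ≤ 2 ^ 48 * (2 ^ 19 * #A ^ 3) * #(A + A) ^ 15 := by gcongr
      _ = #A ^ 3 * (2 ^ 67 * #(A + A) ^ 15) := by ring
      _ ≤ #A ^ 3 * (2 ^ 76 * #(A + A) ^ 15) := by gcongr <;> norm_num
  · calc #S ^ 4 * t ^ 12 * #A ^ 3 = (#S * t) ^ 4 * t ^ 8 * #A ^ 3 := by ring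
      _ ≤ (#A ^ 2) ^ 4 * t ^ 8 * #A ^ 3 := by gcongr
      _ = (#A ^ 4 * t ^ 4) ^ 2 * #A ^ 3 := by ring
      _ ≤ (p ^ 2 * t ^ 4) ^ 2 * #A ^ 3 := by gcongr
      _ ≤ (2 ^ 24 * #(A + A) ^ 6) ^ 2 * #(A + A) ^ 3 := by gcongr
      _ = 2 ^ 48 * #(A + A) ^ 15 := by ring
      _ ≤ 2 ^ 76 * #(A + A) ^ 15 := by gcongr <;> norm_num

end PopularRatios

section MulEnergy

variable {F : Type*} [Field F] [DecidableEq F]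

/-- The third multiplicative energy `E₃ˣ(A)`: for `0 ∉ A`, the number of triples of pairs of
elements of `A` with the same ratio. -/
def thirdMulEnergy (A : Finset F) : ℕ :=
  ∑ x ∈ A / A, ratioRep A x ^ 3

lemma sum_ratioRep_pow_three_le {A : Finset F} (hA : 0 ∉ A) (X : Finset F) :
    ∑ x ∈ X, ratioRep A x ^ 3 ≤ thirdMulEnergy A := by
  refine sum_le_sum_of_ne_zero fun x _ hx => ?_
  obtain ⟨b, hb⟩ := card_pos.mp (Nat.pos_of_ne_zero ((pow_ne_zero_iff three_ne_zero).mp hx))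
  obtain ⟨hb, hxb⟩ := mem_filter.mp hb
  exact mem_div.mpr ⟨x * b, hxb, b, hb, mul_div_cancel_right₀ x (ne_of_mem_of_not_mem hb hA)⟩

lemma pow_three_le_sum_Ioc (r : ℕ) : r ^ 3 ≤ ∑ t ∈ Ioc 0 r, 3 * t ^ 2 := by
  induction r with
  | zero => simp
  | succ r ih =>
    rw [sum_Ioc_succ_top r.zero_le]
    calc (r + 1) ^ 3 ≤ r ^ 3 + 3 * (r + 1) ^ 2 := by ring_nf; omega
      _ ≤ _ := Nat.add_le_add_right ih _

lemma one_add_log_le_two_mul_log {a p : ℕ} (ha : 0 < a) (hp₂ : 2 ≤ p) (hap : a ^ 2 ≤ p) :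
    1 + Real.log a ≤ 2 * Real.log p := by
  have hlog_two : Real.log 2 ≤ Real.log p := Real.log_le_log two_pos (mod_cast hp₂)
  have hlog : Real.log (a ^ 2) ≤ Real.log p := Real.log_le_log (by positivity) (mod_cast hap)
  rw [Real.log_pow] at hlog
  push_cast at hlog
  linarith [Real.log_two_gt_d9]

lemma rpow_mul_half_rpow_le {a K : ℝ} (hK : 0 ≤ K) (ha : 0 < a) :
    (K * a) ^ (15 / 4 : ℝ) * (a / 2) ^ (-3 / 4 : ℝ) ≤ 2 * (K ^ (5 / 4 : ℝ) * a) ^ 3 := by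
  have hK_pow : K ^ (15 / 4 : ℝ) = (K ^ (5 / 4 : ℝ)) ^ 3 := by
    rw [← Real.rpow_mul_natCast hK]
    norm_num
  have ha_pow : a ^ (15 / 4 : ℝ) * a ^ (-3 / 4 : ℝ) = a ^ 3 := by
    rw [← Real.rpow_add ha, ← Real.rpow_natCast]
    norm_num
  have htwo : ((2 : ℝ) ^ (-3 / 4 : ℝ))⁻¹ ≤ 2 := by
    rw [← Real.rpow_neg two_pos.le]
    exact Real.rpow_le_self_of_one_le one_le_two (by norm_num)
  calc (K * a) ^ (15 / 4 : ℝ) * (a / 2) ^ (-3 / 4 : ℝ)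
      = ((2 : ℝ) ^ (-3 / 4 : ℝ))⁻¹ * (K ^ (15 / 4 : ℝ) *
        (a ^ (15 / 4 : ℝ) * a ^ (-3 / 4 : ℝ))) := by
        rw [Real.mul_rpow hK ha.le, Real.div_rpow ha.le two_pos.le]
        ring
    _ ≤ 2 * (K ^ (15 / 4 : ℝ) * (a ^ (15 / 4 : ℝ) * a ^ (-3 / 4 : ℝ))) := by gcongr
    _ = _ := by rw [hK_pow, ha_pow, mul_pow]

variable {p : ℕ} [CharP F p]

lemma card_popularRatios_mul_pow_three_le {A S : Finset F} {t : ℕ} (hA : 0 ∉ A) (hp : #A ^ 2 ≤ p)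
    (hS : ∀ x ∈ S, t ≤ ratioRep A x) :
    (#S : ℝ) * t ^ 3 ≤ 2 ^ 19 * (#(A + A) : ℝ) ^ (15 / 4 : ℝ) * (#A : ℝ) ^ (-3 / 4 : ℝ) := by
  rcases A.eq_empty_or_nonempty with rfl | hne
  · obtain rfl | ht := Nat.eq_zero_or_pos t
    · simp
    · obtain rfl : S = ∅ := eq_empty_of_forall_notMem fun x hx => by
        simpa [ratioRep, ht.ne'] using hS x hx
      simp
  have ha : (0 : ℝ) < #A := mod_cast hne.card_pos
  refine le_of_pow_le_pow_left₀ four_ne_zero (by positivity) ?_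
  refine le_of_mul_le_mul_right ?_ (pow_pos ha 3)
  have hu_pow : ((#(A + A) : ℝ) ^ (15 / 4 : ℝ)) ^ 4 = (#(A + A) : ℝ) ^ 15 := by
    rw [← Real.rpow_mul_natCast (Nat.cast_nonneg _), ← Real.rpow_natCast]
    norm_num
  have ha_pow : ((#A : ℝ) ^ (-3 / 4 : ℝ)) ^ 4 * (#A : ℝ) ^ 3 = 1 := by
    rw [← Real.rpow_mul_natCast ha.le, ← Real.rpow_natCast, ← Real.rpow_add ha]
    norm_num
  calc ((#S : ℝ) * t ^ 3) ^ 4 * #A ^ 3 = (#S : ℝ) ^ 4 * t ^ 12 * #A ^ 3 := by ring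
    _ ≤ 2 ^ 76 * (#(A + A) : ℝ) ^ 15 := mod_cast card_popularRatios_le hA hp hS
    _ = 2 ^ 76 * ((#(A + A) : ℝ) ^ (15 / 4 : ℝ)) ^ 4 *
        (((#A : ℝ) ^ (-3 / 4 : ℝ)) ^ 4 * (#A : ℝ) ^ 3) := by rw [hu_pow, ha_pow, mul_one]
    _ = _ := by ring

theorem thirdMulEnergy_le {A : Finset F} (hA : 0 ∉ A) (hp : #A ^ 2 ≤ p) :
    (thirdMulEnergy A : ℝ) ≤ 3 * 2 ^ 19 * (#(A + A) : ℝ) ^ (15 / 4 : ℝ) *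
      (#A : ℝ) ^ (-3 / 4 : ℝ) * (1 + Real.log #A) := by
  let M : ℝ := 2 ^ 19 * (#(A + A) : ℝ) ^ (15 / 4 : ℝ) * (#A : ℝ) ^ (-3 / 4 : ℝ)
  have hlayer : thirdMulEnergy A ≤
      ∑ t ∈ Ioc 0 #A, #{x ∈ A / A | t ≤ ratioRep A x} • (3 * t ^ 2) := by
    rw [← sum_sum_Ioc_eq_sum_card_smul _ _ _ _ fun x _ => ratioRep_le_card A x]
    exact sum_le_sum fun x _ => pow_three_le_sum_Ioc _
  have hterm (t : ℕ) (ht : t ∈ Ioc 0 #A) :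
      (#{x ∈ A / A | t ≤ ratioRep A x} : ℝ) * (3 * t ^ 2) ≤ 3 * M * (t : ℝ)⁻¹ := by
    have ht₀ : (0 : ℝ) < t := mod_cast (mem_Ioc.mp ht).1
    have hM : (#{x ∈ A / A | t ≤ ratioRep A x} : ℝ) * t ^ 3 ≤ M :=
      card_popularRatios_mul_pow_three_le hA hp fun x hx => (mem_filter.mp hx).2
    rw [← div_eq_mul_inv, le_div_iff₀ ht₀]
    linarith
  have hharmonic : ∑ t ∈ Ioc 0 #A, (t : ℝ)⁻¹ ≤ 1 + Real.log #A := by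
    have := harmonic_le_one_add_log #A
    rw [harmonic_eq_sum_Icc] at this
    push_cast at this
    exact this
  calc (thirdMulEnergy A : ℝ)
      ≤ ∑ t ∈ Ioc 0 #A, (#{x ∈ A / A | t ≤ ratioRep A x} : ℝ) * (3 * t ^ 2) := by
        exact_mod_cast hlayer
    _ ≤ ∑ t ∈ Ioc 0 #A, 3 * M * (t : ℝ)⁻¹ := sum_le_sum hterm
    _ = 3 * M * ∑ t ∈ Ioc 0 #A, (t : ℝ)⁻¹ := by rw [mul_sum]
    _ ≤ 3 * M * (1 + Real.log #A) := by gcongr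
    _ = _ := by ring

lemma card_le_card_erase_mul_two {α : Type*} [DecidableEq α] {s : Finset α} {a : α}
    (h : (s.erase a).Nonempty) : #s ≤ #(s.erase a) * 2 := by
  have := pred_card_le_card_erase (s := s) (a := a)
  have := h.card_pos
  omega

lemma thirdMulEnergy_erase_zero_le {A : Finset F} {K : ℝ} (hp : #A ^ 2 ≤ p)
    (hK : (#(A + A) : ℝ) ≤ K * #A) :
    (thirdMulEnergy (A.erase 0) : ℝ) ≤
      3 * 2 ^ 21 * Real.log p * (K ^ (5 / 4 : ℝ) * #A) ^ 3 := by
  rcases A.eq_empty_or_nonempty with rfl | hne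
  · simp [thirdMulEnergy]
  have ha : 0 < #A := hne.card_pos
  have hK₀ : 0 ≤ K := nonneg_of_mul_nonneg_left ((Nat.cast_nonneg _).trans hK) (mod_cast ha)
  have : 0 ≤ Real.log p := Real.log_natCast_nonneg p
  rcases (A.erase 0).eq_empty_or_nonempty with h | hne'
  · rw [h]
    simp only [thirdMulEnergy, empty_div, sum_empty, Nat.cast_zero]
    positivity
  have hsub : A.erase 0 ⊆ A := erase_subset 0 A
  have hp₀ : #(A.erase 0) ^ 2 ≤ p := (Nat.pow_le_pow_left (card_le_card hsub) 2).trans hp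
  have hp₂ : 2 ≤ p := by
    have := CharP.char_ne_one F p
    have := (pow_pos ha 2).trans_le hp
    omega
  have hu : (#(A.erase 0 + A.erase 0) : ℝ) ≤ K * #A :=
    le_trans (mod_cast card_le_card (add_subset_add hsub hsub)) hK
  have hhalf : (#A : ℝ) / 2 ≤ #(A.erase 0) := by
    rw [div_le_iff₀ two_pos]
    exact_mod_cast card_le_card_erase_mul_two hne'
  have hhalf_pow := Real.rpow_le_rpow_of_nonpos (z := (-3 / 4 : ℝ)) (by positivity) hhalf
    (by norm_num)
  have : 0 ≤ Real.log #(A.erase 0) := Real.log_natCast_nonneg _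
  calc (thirdMulEnergy (A.erase 0) : ℝ)
      ≤ 3 * 2 ^ 19 * (#(A.erase 0 + A.erase 0) : ℝ) ^ (15 / 4 : ℝ) *
        (#(A.erase 0) : ℝ) ^ (-3 / 4 : ℝ) * (1 + Real.log #(A.erase 0)) :=
        thirdMulEnergy_le (notMem_erase 0 A) hp₀
    _ ≤ 3 * 2 ^ 19 * (K * #A) ^ (15 / 4 : ℝ) * ((#A : ℝ) / 2) ^ (-3 / 4 : ℝ) *
        (2 * Real.log p) := by
        gcongr ?_ * ?_ ^ _ * ?_ * ?_
        exact one_add_log_le_two_mul_log hne'.card_pos hp₂ hp₀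
    _ ≤ 3 * 2 ^ 19 * (2 * (K ^ (5 / 4 : ℝ) * #A) ^ 3) * (2 * Real.log p) := by
        rw [mul_assoc (3 * 2 ^ 19)]
        gcongr _ * ?_ * _
        exact rpow_mul_half_rpow_le hK₀ (Nat.cast_pos.mpr ha)
    _ = _ := by ring

end MulEnergy

section Sextuples

lemma sum_mul_sq_pow_three_le {ι : Type*} (s : Finset ι) {f g : ι → ℝ} (hf : ∀ i ∈ s, 0 ≤ f i)
    (hg : ∀ i ∈ s, 0 ≤ g i) :
    (∑ i ∈ s, f i * g i ^ 2) ^ 3 ≤ (∑ i ∈ s, f i ^ 3) * (∑ i ∈ s, g i ^ 3) ^ 2 := by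
  have hf' : 0 ≤ ∑ i ∈ s, f i ^ 3 := sum_nonneg fun i hi => pow_nonneg (hf i hi) 3
  have hg' : 0 ≤ ∑ i ∈ s, g i ^ 3 := sum_nonneg fun i hi => pow_nonneg (hg i hi) 3
  have hconj : Real.HolderConjugate 3 (3 / 2) := by
    rw [Real.holderConjugate_iff]
    norm_num
  have hHolder := Real.inner_le_Lp_mul_Lq_of_nonneg s hconj hf fun i _ => sq_nonneg (g i)
  have hf_pow : ∑ i ∈ s, f i ^ (3 : ℝ) = ∑ i ∈ s, f i ^ 3 :=
    sum_congr rfl fun i _ => Real.rpow_ofNat (f i) 3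
  have hg_pow : ∑ i ∈ s, (g i ^ 2) ^ (3 / 2 : ℝ) = ∑ i ∈ s, g i ^ 3 :=
    sum_congr rfl fun i hi => by
      rw [← Real.rpow_natCast_mul (hg i hi), ← Real.rpow_natCast]
      norm_num
  rw [hf_pow, hg_pow] at hHolder
  refine (pow_le_pow_left₀ (sum_nonneg fun i hi => mul_nonneg (hf i hi) (sq_nonneg _)) hHolder
    3).trans_eq ?_
  rw [mul_pow, ← Real.rpow_mul_natCast hf', ← Real.rpow_mul_natCast hg',
    ← Real.rpow_natCast _ 2]
  norm_num

variable {F : Type*} [Field F] [DecidableEq F]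

/-- The sextuples `(a, a', b₁, b₁', b₂, b₂') ∈ A² × B⁴` with `b₁ / b₁' = b₂ / b₂' = a / a'`, the
equalities being cleared of denominators. -/
def proportionalSextuples (A B : Finset F) : Finset (F × F × F × F × F × F) :=
  {t ∈ A ×ˢ A ×ˢ B ×ˢ B ×ˢ B ×ˢ B | t.2.2.1 * t.2.1 = t.2.2.2.1 * t.1 ∧
    t.2.2.2.2.1 * t.2.1 = t.2.2.2.2.2 * t.1}

lemma card_filter_proportional_le (B : Finset F) {a a' : F} (ha : a ≠ 0) (ha' : a' ≠ 0) :
    #{w ∈ B ×ˢ B | w.1 * a' = w.2 * a} ≤ ratioRep (B.erase 0) (a' / a) + 1 := by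
  have hsub : {w ∈ B ×ˢ B | w.1 * a' = w.2 * a} ⊆ insert (0, 0)
      ({b ∈ B.erase 0 | a' / a * b ∈ B.erase 0}.image fun b => (b, a' / a * b)) := by
    rintro ⟨b, b'⟩ h
    simp only [mem_filter, mem_product] at h
    obtain rfl : a' / a * b = b' := by
      rw [div_mul_eq_mul_div, div_eq_iff ha, mul_comm, h.2]
    by_cases hb : b = 0
    · simp [hb]
    · refine mem_insert_of_mem (mem_image_of_mem _ (mem_filter.mpr ⟨mem_erase.mpr ⟨hb, h.1.1⟩, ?_⟩))
      exact mem_erase.mpr ⟨mul_ne_zero (div_ne_zero ha' ha) hb, h.1.2⟩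
  exact (card_le_card hsub).trans ((card_insert_le _ _).trans
    (Nat.add_le_add_right card_image_le 1))

lemma card_filter_div_eq {A : Finset F} (hA : 0 ∉ A) (x : F) :
    #{z ∈ A ×ˢ A | z.2 / z.1 = x} = ratioRep A x := by
  have hne {a : F} (ha : a ∈ A) : a ≠ 0 := ne_of_mem_of_not_mem ha hA
  refine card_nbij' Prod.fst (fun b => (b, x * b)) ?_ ?_ ?_ ?_
  · rintro ⟨a, a'⟩ h
    simp only [mem_coe, mem_filter, mem_product] at h ⊢
    obtain ⟨⟨ha, ha'⟩, rfl⟩ := h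
    exact ⟨ha, by rwa [div_mul_cancel₀ _ (hne ha)]⟩
  · intro b hb
    simp only [mem_coe, mem_filter, mem_product] at hb ⊢
    exact ⟨hb, mul_div_cancel_right₀ x (hne hb.1)⟩
  · rintro ⟨a, a'⟩ h
    simp only [mem_coe, mem_filter, mem_product] at h
    obtain ⟨⟨ha, -⟩, rfl⟩ := h
    simp only [div_mul_cancel₀ _ (hne ha)]
  · intro b _
    rfl

lemma sum_div_eq_sum_ratioRep_mul {A : Finset F} (hA : 0 ∉ A) (f : F → ℕ) :
    ∑ z ∈ A ×ˢ A, f (z.2 / z.1) = ∑ x ∈ A / A, ratioRep A x * f x := by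
  rw [← sum_fiberwise_of_maps_to (t := A / A) (g := fun z => z.2 / z.1)
    fun z hz => div_mem_div (mem_product.mp hz).2 (mem_product.mp hz).1]
  refine sum_congr rfl fun x _ => ?_
  rw [← card_filter_div_eq hA, ← smul_eq_mul]
  exact sum_eq_card_nsmul fun z hz => congrArg f (mem_filter.mp hz).2

lemma card_proportionalSextuples_le {A : Finset F} (hA : 0 ∉ A) (B : Finset F) :
    #(proportionalSextuples A B) ≤
      2 * ∑ x ∈ A / A, ratioRep A x * ratioRep (B.erase 0) x ^ 2 + 2 * #A ^ 2 := by
  have hfiber (z : F × F) (hz : z ∈ A ×ˢ A) :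
      #{w ∈ B ×ˢ B | w.1 * z.2 = w.2 * z.1} ^ 2 ≤
        2 * ratioRep (B.erase 0) (z.2 / z.1) ^ 2 + 2 := by
    obtain ⟨hz₁, hz₂⟩ := mem_product.mp hz
    refine (Nat.pow_le_pow_left (card_filter_proportional_le B (ne_of_mem_of_not_mem hz₁ hA)
      (ne_of_mem_of_not_mem hz₂ hA)) 2).trans ?_
    simpa [mul_add] using add_sq_le (a := ratioRep (B.erase 0) (z.2 / z.1)) (b := 1)
  calc #(proportionalSextuples A B)
      = ∑ z ∈ A ×ˢ A, #{w ∈ B ×ˢ B | w.1 * z.2 = w.2 * z.1} ^ 2 := by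
        simp only [sq, ← card_product]
        rw [← card_sigma]
        refine card_nbij' (fun t => ⟨(t.1, t.2.1), (t.2.2.1, t.2.2.2.1), t.2.2.2.2⟩)
          (fun s => (s.1.1, s.1.2, s.2.1.1, s.2.1.2, s.2.2)) ?_ ?_ (fun _ _ => rfl)
          (fun _ _ => rfl)
        all_goals
          intro t ht
          simp only [proportionalSextuples, mem_coe, mem_filter, mem_product, mem_sigma] at ht ⊢
          tauto
    _ ≤ ∑ z ∈ A ×ˢ A, (2 * ratioRep (B.erase 0) (z.2 / z.1) ^ 2 + 2) := sum_le_sum hfiber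
    _ = _ := by
        rw [sum_add_distrib, ← mul_sum, sum_const, card_product,
          sum_div_eq_sum_ratioRep_mul hA fun x => ratioRep (B.erase 0) x ^ 2]
        ring

variable {p : ℕ} [CharP F p]

lemma sum_ratioRep_mul_sq_le {A B : Finset F} {K L : ℝ} (hA : 0 ∉ A) (hAp : #A ^ 2 ≤ p)
    (hBp : #B ^ 2 ≤ p) (hK : (#(A + A) : ℝ) ≤ K * #A) (hL : (#(B + B) : ℝ) ≤ L * #B) :
    ∑ x ∈ A / A, (ratioRep A x : ℝ) * (ratioRep (B.erase 0) x : ℝ) ^ 2 ≤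
      3 * 2 ^ 21 * Real.log p * (K ^ (5 / 4 : ℝ) * #A) * (L ^ (5 / 4 : ℝ) * #B) ^ 2 := by
  rcases A.eq_empty_or_nonempty with rfl | hne
  · simp
  have hK₀ : 0 ≤ K :=
    nonneg_of_mul_nonneg_left ((Nat.cast_nonneg _).trans hK) (Nat.cast_pos.mpr hne.card_pos)
  have : 0 ≤ Real.log p := Real.log_natCast_nonneg p
  have hAE : ∑ x ∈ A / A, (ratioRep A x : ℝ) ^ 3 ≤
      3 * 2 ^ 21 * Real.log p * (K ^ (5 / 4 : ℝ) * #A) ^ 3 := by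
    have henergy := thirdMulEnergy_erase_zero_le hAp hK
    rw [erase_eq_of_notMem hA] at henergy
    exact le_trans (mod_cast sum_ratioRep_pow_three_le hA _) henergy
  have hBE : ∑ x ∈ A / A, (ratioRep (B.erase 0) x : ℝ) ^ 3 ≤
      3 * 2 ^ 21 * Real.log p * (L ^ (5 / 4 : ℝ) * #B) ^ 3 :=
    le_trans (mod_cast sum_ratioRep_pow_three_le (notMem_erase 0 B) _)
      (thirdMulEnergy_erase_zero_le hBp hL)
  refine le_of_pow_le_pow_left₀ three_ne_zero (by positivity) ?_
  calc (∑ x ∈ A / A, (ratioRep A x : ℝ) * (ratioRep (B.erase 0) x : ℝ) ^ 2) ^ 3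
      ≤ (∑ x ∈ A / A, (ratioRep A x : ℝ) ^ 3) *
        (∑ x ∈ A / A, (ratioRep (B.erase 0) x : ℝ) ^ 3) ^ 2 :=
        sum_mul_sq_pow_three_le _ (fun _ _ => Nat.cast_nonneg _) fun _ _ => Nat.cast_nonneg _
    _ ≤ (3 * 2 ^ 21 * Real.log p * (K ^ (5 / 4 : ℝ) * #A) ^ 3) *
        (3 * 2 ^ 21 * Real.log p * (L ^ (5 / 4 : ℝ) * #B) ^ 3) ^ 2 := by gcongr
    _ = _ := by ring

end Sextuples

end SumProduct

open SumProduct in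
theorem stmt_15_general {F : Type*} [Field F] [DecidableEq F] {p : ℕ} [CharP F p]
    {A B : Finset F} {K L : ℝ} (hA : 0 ∉ A) (hAp : #A ^ 2 ≤ p) (hBp : #B ^ 2 ≤ p)
    (hK : (#(A + A) : ℝ) ≤ K * #A) (hL : (#(B + B) : ℝ) ≤ L * #B) :
    (#(proportionalSextuples A B) : ℝ) ≤ 3 * 2 ^ 22 *
      (K ^ (5 / 4 : ℝ) * L ^ (5 / 2 : ℝ) * #A * (#B : ℝ) ^ 2 * Real.log p + (#A : ℝ) ^ 2 * #B) := by
  rcases B.eq_empty_or_nonempty with rfl | hne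
  · simp [proportionalSextuples]
  have hB : (1 : ℝ) ≤ #B := mod_cast hne.card_pos
  have hL₀ : 0 ≤ L := nonneg_of_mul_nonneg_left ((Nat.cast_nonneg _).trans hL) (by linarith)
  have hL_pow : L ^ (5 / 2 : ℝ) = (L ^ (5 / 4 : ℝ)) ^ 2 := by
    rw [← Real.rpow_mul_natCast hL₀]
    norm_num
  calc (#(proportionalSextuples A B) : ℝ)
      ≤ 2 * ∑ x ∈ A / A, (ratioRep A x : ℝ) * (ratioRep (B.erase 0) x : ℝ) ^ 2 + 2 * (#A : ℝ) ^ 2 :=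
        mod_cast card_proportionalSextuples_le hA B
    _ ≤ 2 * (3 * 2 ^ 21 * Real.log p * (K ^ (5 / 4 : ℝ) * #A) * (L ^ (5 / 4 : ℝ) * #B) ^ 2) +
        3 * 2 ^ 22 * ((#A : ℝ) ^ 2 * #B) := by
        gcongr
        · exact sum_ratioRep_mul_sq_le hA hAp hBp hK hL
        · norm_num
        · exact le_mul_of_one_le_right (sq_nonneg _) hB
    _ = _ := by
        rw [hL_pow]
        ring

theorem stmt_15 :
    ∃ C : ℝ, 0 < C ∧
      ∀ (p : ℕ), p.Prime →
        ∀ (A B : Finset (ZMod p)) (K L : ℝ), 0 < K → 0 < L →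
          (0 : ZMod p) ∉ A →
          (A.card : ℝ) < Real.sqrt p →
          (B.card : ℝ) < Real.sqrt p →
          ((A + A).card : ℝ) ≤ K * A.card →
          ((B + B).card : ℝ) ≤ L * B.card →
          (((A ×ˢ A ×ˢ B ×ˢ B ×ˢ B ×ˢ B).filter
              (fun t : ZMod p × ZMod p × ZMod p × ZMod p × ZMod p × ZMod p =>
                t.2.2.1 * t.2.1 = t.2.2.2.1 * t.1 ∧
                t.2.2.2.2.1 * t.2.1 = t.2.2.2.2.2 * t.1)).card : ℝ)
            ≤ C * (K ^ ((5 : ℝ) / 4) * L ^ ((5 : ℝ) / 2) * A.card * (B.card : ℝ) ^ 2 *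
                  Real.log p
                + (A.card : ℝ) ^ 2 * B.card) := by
  refine ⟨3 * 2 ^ 22, by norm_num, fun p hp A B K L _ _ hA hAp hBp hK hL => ?_⟩
  have := Fact.mk hp
  have sq_card_le {S : Finset (ZMod p)} (hS : (#S : ℝ) < √p) : #S ^ 2 ≤ p :=
    mod_cast ((Real.lt_sqrt (Nat.cast_nonneg _)).mp hS).le
  exact stmt_15_general hA (sq_card_le hAp) (sq_card_le hBp) hK hL
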